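/- arXiv:2010.00429 — 3 statements merged into one kernel-verified Lean document; each statement's English description precedes it below -/
import Mathlib

section
/- Let G be a finite simple graph with maximum degree Δ and chromatic number χ, where 2 ≤ χ ≤ Δ. Then the injective chromatic index of G satisfies χ'_inj(G) ≤ (χ − 1)·⌈27 Δ ln Δ⌉. -/
open SimpleGraph

/-- Two distinct edges of `G` *conflict* if they are at distance exactly 1 in `G`
(they share no endpoint but some endpoint of one is adjacent to some endpoint of the
other), or they lie in a common triangle of `G`. -/
def EdgeConflict {V : Type*} (G : SimpleGraph V) (e₁ e₂ : Sym2 V) : Prop :=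
  e₁ ≠ e₂ ∧
    (((∀ u ∈ e₁, u ∉ e₂) ∧ ∃ u ∈ e₁, ∃ v ∈ e₂, G.Adj u v) ∨
      (∃ a b c : V, G.Adj a b ∧ G.Adj b c ∧ G.Adj a c ∧
        e₁ ∈ ({s(a, b), s(b, c), s(a, c)} : Set (Sym2 V)) ∧
        e₂ ∈ ({s(a, b), s(b, c), s(a, c)} : Set (Sym2 V))))

/-- An injective edge-coloring of `G` with `k` colors. -/
def IsInjEdgeColoring {V : Type*} (G : SimpleGraph V) {k : ℕ} (f : Sym2 V → Fin k) : Prop :=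
  ∀ e₁ ∈ G.edgeSet, ∀ e₂ ∈ G.edgeSet, EdgeConflict G e₁ e₂ → f e₁ ≠ f e₂

/-- The injective chromatic index of `G`. -/
noncomputable def injChromIndex {V : Type*} (G : SimpleGraph V) : ℕ :=
  sInf {k : ℕ | ∃ f : Sym2 V → Fin k, IsInjEdgeColoring G f}

/-!
Orient every edge of `G` from a tail `a` to a head `b` so that the color of `b` in a proper
`χ`-coloring is smaller than that of `a`; heads then use only `χ - 1` colors. If a vertex set `M`
contains `a` but no other neighbor of the endpoints of the edge, and likewise for a second edge,
then the two edges can conflict only through adjacent heads. Hence pairs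
(head color, index of a set isolating the tail) form an injective edge-coloring.

For the isolating sets, put each vertex into each of `k = ⌈27 Δ ln Δ⌉` sets independently with
probability `1 / (2Δ)`. An edge sees at most `2Δ` vertices, so one set isolates its tail with
probability at least `q = (1 / (2Δ)) (1 - 1 / (2Δ)) ^ (2Δ - 1)`, and all `k` fail with probability
at most `(1 - q) ^ k`. Each failure interacts with at most `2Δ³` others, so the symmetric local
lemma applies as soon as `8 Δ³ (1 - q) ^ k ≤ 1`.
-/

open Finset MeasureTheory ProbabilityTheory unitInterval

section LocalLemma

/-- The event that none of the events `A j`, `j ∈ S`, occurs. -/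
def avoidSet {Ω ι : Type*} (A : ι → Set Ω) (S : Finset ι) : Set Ω := ⋂ j ∈ S, (A j)ᶜ

theorem avoidSet_anti {Ω ι : Type*} {A : ι → Set Ω} {S T : Finset ι} (h : S ⊆ T) :
    avoidSet A T ⊆ avoidSet A S :=
  Set.biInter_subset_biInter_left h

variable {Ω ι : Type*} [MeasurableSpace Ω] {μ : Measure Ω} {A : ι → Set Ω} {N : ι → Finset ι}
  {p : ℝ} {D : ℕ}

theorem measureReal_avoidSet_le_add_sum [IsFiniteMeasure μ] [DecidableEq ι] (S T : Finset ι) :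
    μ.real (avoidSet A S) ≤
      μ.real (avoidSet A (S ∪ T)) + ∑ j ∈ T, μ.real (A j ∩ avoidSet A S) := by
  have hcover : avoidSet A S ⊆ avoidSet A (S ∪ T) ∪ ⋃ j ∈ T, A j ∩ avoidSet A S := by
    intro ω hω
    simp only [avoidSet, Set.mem_union, Set.mem_iInter, Set.mem_iUnion, Set.mem_inter_iff,
      Set.mem_compl_iff, mem_union] at hω ⊢
    grind
  calc μ.real (avoidSet A S)
      ≤ μ.real (avoidSet A (S ∪ T) ∪ ⋃ j ∈ T, A j ∩ avoidSet A S) := measureReal_mono hcover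
    _ ≤ μ.real (avoidSet A (S ∪ T)) + μ.real (⋃ j ∈ T, A j ∩ avoidSet A S) :=
        measureReal_union_le _ _
    _ ≤ _ := by gcongr; exact measureReal_biUnion_finset_le _ _

theorem measureReal_inter_avoidSet_le [IsProbabilityMeasure μ] (hp : ∀ i, μ.real (A i) ≤ p)
    (hN : ∀ i, #(N i) ≤ D) (hpD : 4 * p * D ≤ 1)
    (hind : ∀ i S, Disjoint S (N i) → IndepSet (A i) (avoidSet A S) μ) (S : Finset ι) (i : ι) :
    μ.real (A i ∩ avoidSet A S) ≤ 2 * p * μ.real (avoidSet A S) := by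
  classical
  induction S using Finset.strongInduction generalizing i with
  | H S ih =>
    let near := S.filter (· ∈ N i)
    let far := S.filter (· ∉ N i)
    have hp0 : 0 ≤ p := measureReal_nonneg.trans (hp i)
    have hnear : (#near : ℝ) ≤ D := by
      exact_mod_cast (card_le_card fun j hj => (mem_filter.1 hj).2).trans (hN i)
    have hfar_indep : μ.real (A i ∩ avoidSet A far) = μ.real (A i) * μ.real (avoidSet A far) := by
      have hdisj : Disjoint far (N i) := disjoint_left.2 fun j hj => (mem_filter.1 hj).2
      simp only [measureReal_def, (hind i far hdisj).measure_inter_eq_mul, ENNReal.toReal_mul]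
    have hnear_sum : ∑ j ∈ near, μ.real (A j ∩ avoidSet A far) ≤
        #near * (2 * p * μ.real (avoidSet A far)) := by
      rw [← nsmul_eq_mul]
      refine sum_le_card_nsmul _ _ _ fun j hj => ih far ?_ j
      exact filter_ssubset.2 ⟨j, (mem_filter.1 hj).1, not_not.2 (mem_filter.1 hj).2⟩
    have hhalf : #near * (2 * p * μ.real (avoidSet A far)) ≤ 1 / 2 * μ.real (avoidSet A far) := by
      rw [← mul_assoc]
      gcongr
      nlinarith
    have hfar : μ.real (avoidSet A far) ≤ 2 * μ.real (avoidSet A S) := by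
      have hunion := measureReal_avoidSet_le_add_sum (μ := μ) (A := A) far near
      rw [union_comm, filter_union_filter_not_eq] at hunion
      linarith
    calc μ.real (A i ∩ avoidSet A S)
        ≤ μ.real (A i ∩ avoidSet A far) :=
          measureReal_mono (Set.inter_subset_inter_right _ (avoidSet_anti (filter_subset _ _)))
      _ = μ.real (A i) * μ.real (avoidSet A far) := hfar_indep
      _ ≤ p * (2 * μ.real (avoidSet A S)) := by gcongr; exact hp i
      _ = 2 * p * μ.real (avoidSet A S) := by ring

/-- The symmetric Lovász local lemma; `N i` contains every index on which `A i` may depend. -/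
theorem measureReal_avoidSet_pos [IsProbabilityMeasure μ] (hp : ∀ i, μ.real (A i) ≤ p)
    (hN : ∀ i, #(N i) ≤ D) (hD : 0 < D) (hpD : 4 * p * D ≤ 1)
    (hind : ∀ i S, Disjoint S (N i) → IndepSet (A i) (avoidSet A S) μ) (S : Finset ι) :
    0 < μ.real (avoidSet A S) := by
  classical
  induction S using Finset.induction_on with
  | empty => simp [avoidSet]
  | insert i S _ ih =>
    have hcond := measureReal_inter_avoidSet_le hp hN hpD hind S i
    have hunion := measureReal_avoidSet_le_add_sum (μ := μ) (A := A) S {i}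
    rw [union_comm, ← insert_eq, sum_singleton] at hunion
    have hp4 : 4 * p ≤ 1 := by
      have hp0 : 0 ≤ p := measureReal_nonneg.trans (hp i)
      have hD1 : (1 : ℝ) ≤ D := by exact_mod_cast hD
      nlinarith
    nlinarith

end LocalLemma

section ProductSpace

variable {ι κ : Type*} {X : ι → Type*}

theorem dependsOn_mem_compl {A : Set (∀ i, X i)} {s : Set ι} (hA : DependsOn (· ∈ A) s) :
    DependsOn (· ∈ Aᶜ) s :=
  fun _ _ h => congrArg Not (hA h)

theorem dependsOn_mem_biInter {A : κ → Set (∀ i, X i)} {s : κ → Set ι} {T : Finset κ}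
    (hA : ∀ k ∈ T, DependsOn (· ∈ A k) (s k)) :
    DependsOn (· ∈ ⋂ k ∈ T, A k) (⋃ k ∈ T, s k) := by
  intro x y h
  simp only [Set.mem_iInter]
  exact propext <| forall₂_congr fun k hk =>
    Iff.of_eq (hA k hk fun i hi => h i (Set.mem_biUnion hk hi))

variable [∀ i, MeasurableSpace (X i)]

theorem exists_measurableSet_eq_preimage_restrict [∀ i, Nonempty (X i)] {s : Finset ι}
    {A : Set (∀ i, X i)} (hmeas : MeasurableSet A) (hA : DependsOn (· ∈ A) s) :
    ∃ B : Set (∀ i : s, X i), MeasurableSet B ∧ A = (fun ω (i : s) => ω i) ⁻¹' B := by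
  classical
  let extend (y : ∀ i : s, X i) (i : ι) : X i :=
    if hi : i ∈ s then y ⟨i, hi⟩ else Classical.arbitrary (X i)
  refine ⟨extend ⁻¹' A, ?_, ?_⟩
  · refine measurable_pi_lambda _ (fun i => ?_) hmeas
    by_cases hi : i ∈ s <;> simp only [extend, hi, dite_true, dite_false] <;> fun_prop
  · ext ω
    exact Iff.of_eq (hA fun i (hi : i ∈ s) => by simp [extend, hi])

variable [Fintype ι] {μ : ∀ i, Measure (X i)} [∀ i, IsProbabilityMeasure (μ i)]

theorem indepSet_pi_of_dependsOn {s t : Finset ι} (hst : Disjoint s t) {A B : Set (∀ i, X i)}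
    (hAm : MeasurableSet A) (hBm : MeasurableSet B)
    (hA : DependsOn (· ∈ A) s) (hB : DependsOn (· ∈ B) t) :
    IndepSet A B (Measure.pi μ) := by
  have (i : ι) : Nonempty (X i) := nonempty_of_isProbabilityMeasure (μ i)
  obtain ⟨A', hA'm, rfl⟩ := exists_measurableSet_eq_preimage_restrict hAm hA
  obtain ⟨B', hB'm, rfl⟩ := exists_measurableSet_eq_preimage_restrict hBm hB
  have hindep : iIndepFun (fun i (ω : ∀ i, X i) => ω i) (Measure.pi μ) :=
    iIndepFun_pi (X := fun _ => id) fun _ => aemeasurable_id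
  exact (indepFun_iff_indepSet_preimage (by fun_prop) (by fun_prop)).1
    (hindep.indepFun_finset s t hst measurable_pi_apply) A' B' hA'm hB'm

theorem measureReal_pi_biInter_of_dependsOn {A : κ → Set (∀ i, X i)} {s : κ → Finset ι}
    (hs : Pairwise (Function.onFun Disjoint s)) (hAm : ∀ k, MeasurableSet (A k))
    (hA : ∀ k, DependsOn (· ∈ A k) (s k)) (T : Finset κ) :
    (Measure.pi μ).real (⋂ k ∈ T, A k) = ∏ k ∈ T, (Measure.pi μ).real (A k) := by
  classical
  induction T using Finset.induction_on with
  | empty => simp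
  | insert k T hk ih =>
    have hrest : DependsOn (· ∈ ⋂ j ∈ T, A j) (T.biUnion s) := by
      simpa only [coe_biUnion, mem_coe] using dependsOn_mem_biInter fun j (_ : j ∈ T) => hA j
    have hdisj : Disjoint (s k) (T.biUnion s) :=
      (disjoint_biUnion_right _ _ _).2 fun j hj => hs (ne_of_mem_of_not_mem hj hk).symm
    have hindep := indepSet_pi_of_dependsOn (μ := μ) hdisj (hAm k)
      (T.measurableSet_biInter fun j _ => hAm j) (hA k) hrest
    rw [set_biInter_insert, prod_insert hk, ← ih]
    simp only [measureReal_def, hindep.measure_inter_eq_mul, ENNReal.toReal_mul]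

theorem exists_forall_notMem_of_dependsOn [Fintype κ] [DecidableEq ι] {A : κ → Set (∀ i, X i)}
    {s : κ → Finset ι} {p : ℝ} {D : ℕ} (hAm : ∀ k, MeasurableSet (A k))
    (hA : ∀ k, DependsOn (· ∈ A k) (s k)) (hp : ∀ k, (Measure.pi μ).real (A k) ≤ p)
    (hs : ∀ k, #{j | ¬ Disjoint (s k) (s j)} ≤ D) (hD : 0 < D) (hpD : 4 * p * D ≤ 1) :
    ∃ ω, ∀ k, ω ∉ A k := by
  have hind (k : κ) (S : Finset κ) (hS : Disjoint S ({j | ¬ Disjoint (s k) (s j)} : Finset κ)) :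
      IndepSet (A k) (avoidSet A S) (Measure.pi μ) := by
    have havoid : DependsOn (· ∈ avoidSet A S) (S.biUnion s) := by
      simpa only [avoidSet, coe_biUnion, mem_coe] using
        dependsOn_mem_biInter fun j (_ : j ∈ S) => dependsOn_mem_compl (hA j)
    have hdisj : Disjoint (s k) (S.biUnion s) := by
      refine (disjoint_biUnion_right _ _ _).2 fun j hj => ?_
      simpa using disjoint_left.1 hS hj
    exact indepSet_pi_of_dependsOn hdisj (hAm k)
      (S.measurableSet_biInter fun j _ => (hAm j).compl) (hA k) havoid
  obtain ⟨ω, hω⟩ := nonempty_of_measureReal_ne_zero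
    (measureReal_avoidSet_pos hp hs hD hpD hind univ).ne'
  exact ⟨ω, by simpa [avoidSet] using hω⟩

end ProductSpace

section RandomMarking

variable {J : Type*} {R : Finset J} {a : J}

/-- The event, for a random marking `ω` of `J`, that `a` is the only marked element of `R`. -/
def onlyMarked (R : Finset J) (a : J) : Set (J → Prop) := {ω | ∀ x ∈ R, (ω x ↔ x = a)}

theorem dependsOn_mem_onlyMarked : DependsOn (· ∈ onlyMarked R a) R :=
  fun _ _ h => propext <| forall₂_congr fun x hx => by rw [h x hx]

variable [Fintype J] {p : I}

theorem measureReal_pi_onlyMarked (ha : a ∈ R) :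
    (Measure.pi fun _ : J => Ber(True, False, p)).real (onlyMarked R a) =
      p * (1 - p) ^ (#R - 1) := by
  classical
  have hpi : onlyMarked R a = (R : Set J).pi fun x => {q | q ↔ x = a} := rfl
  have hself : Ber(True, False, p).real {q | q ↔ a = a} = p :=
    bernoulliMeasure_real_apply_of_mem_of_notMem p .of_discrete (by simp) (by simp)
  have hother (x : J) (hx : x ∈ R.erase a) : Ber(True, False, p).real {q | q ↔ x = a} = 1 - p :=
    bernoulliMeasure_real_apply_of_notMem_of_mem p .of_discrete
      (by simpa using ne_of_mem_erase hx) (by simpa using ne_of_mem_erase hx)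
  rw [hpi, measureReal_def, Measure.pi_pi_finset, ENNReal.toReal_prod]
  simp only [← measureReal_def]
  rw [← mul_prod_erase _ _ ha, hself, prod_congr rfl hother, prod_const, card_erase_of_mem ha]

theorem measureReal_pi_biInter_compl_onlyMarked_le {κ : Type*} {s : κ → Finset J} {a : κ → J}
    {m : ℕ} (hs : Pairwise (Function.onFun Disjoint s)) (ha : ∀ k, a k ∈ s k)
    (hm : ∀ k, #(s k) ≤ m) (T : Finset κ) :
    (Measure.pi fun _ : J => Ber(True, False, p)).real (⋂ k ∈ T, (onlyMarked (s k) (a k))ᶜ) ≤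
      (1 - p * (1 - p) ^ (m - 1)) ^ #T := by
  have hone (k : κ) : (Measure.pi fun _ : J => Ber(True, False, p)).real
      (onlyMarked (s k) (a k))ᶜ ≤ 1 - p * (1 - p) ^ (m - 1) := by
    have hp0 : (0 : ℝ) ≤ p := p.2.1
    rw [probReal_compl_eq_one_sub .of_discrete, measureReal_pi_onlyMarked (ha k)]
    gcongr ?_ - ?_ * ?_
    exact pow_le_pow_of_le_one (by linarith [p.2.2]) (by linarith)
      (Nat.sub_le_sub_right (hm k) 1)
  rw [measureReal_pi_biInter_of_dependsOn hs (fun _ => .of_discrete)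
    (fun k => dependsOn_mem_compl dependsOn_mem_onlyMarked)]
  exact (prod_le_prod (fun _ _ => measureReal_nonneg) fun k _ => hone k).trans_eq (prod_const _)

end RandomMarking

section Numerics

theorem exp_neg_one_le_one_sub_inv_pow (n : ℕ) :
    Real.exp (-1) ≤ (1 - (n + 1 : ℝ)⁻¹) ^ n := by
  rcases n.eq_zero_or_pos with rfl | hn
  · simp
  have hn' : (0 : ℝ) < n := by exact_mod_cast hn
  have hbase : 1 - (n + 1 : ℝ)⁻¹ = (1 + (n : ℝ)⁻¹)⁻¹ := by field_simp; ring
  have hexp : (1 + (n : ℝ)⁻¹) ^ n ≤ Real.exp 1 := by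
    calc (1 + (n : ℝ)⁻¹) ^ n ≤ Real.exp (n : ℝ)⁻¹ ^ n := by
          gcongr; rw [add_comm]; exact Real.add_one_le_exp _
      _ = Real.exp 1 := by rw [← Real.exp_nat_mul, mul_inv_cancel₀ hn'.ne']
  rw [hbase, inv_pow, Real.exp_neg]
  gcongr

-- The factor `4.9` is just below `27 / (2 * Real.exp 1)`.
theorem three_mul_log_two_add_log_le {x : ℝ} (hx : 3 ≤ x) :
    3 * (Real.log 2 + Real.log x) ≤ 4.9 * Real.log x := by
  have hlog : Real.log ((2 : ℝ) ^ 30) ≤ Real.log ((3 : ℝ) ^ 19) :=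
    Real.log_le_log (by norm_num) (by norm_num)
  have hlogx : Real.log 3 ≤ Real.log x := Real.log_le_log (by norm_num) hx
  rw [Real.log_pow, Real.log_pow] at hlog
  push_cast at hlog
  linarith

theorem eight_mul_pow_three_mul_one_sub_pow_le_one_of_three_le {Δ k : ℕ} (hΔ : 3 ≤ Δ)
    (hk : 27 * Δ * Real.log Δ ≤ k) :
    8 * (Δ : ℝ) ^ 3 * (1 - (2 * Δ : ℝ)⁻¹ * (1 - (2 * Δ : ℝ)⁻¹) ^ (2 * Δ - 1)) ^ k ≤ 1 := by
  obtain ⟨n, hn⟩ : ∃ n, 2 * Δ = n + 1 := ⟨2 * Δ - 1, by omega⟩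
  have hn' : (2 * Δ : ℝ) = n + 1 := by exact_mod_cast hn
  have hΔ' : (3 : ℝ) ≤ Δ := by exact_mod_cast hΔ
  have hlog : 0 < Real.log Δ := Real.log_pos (by linarith)
  set q : ℝ := (2 * Δ : ℝ)⁻¹ * (1 - (2 * Δ : ℝ)⁻¹) ^ (2 * Δ - 1) with hq
  have hq_lower : (2 * Δ : ℝ)⁻¹ * Real.exp (-1) ≤ q := by
    rw [hq, hn, hn', Nat.add_sub_cancel]
    gcongr
    exact exp_neg_one_le_one_sub_inv_pow n
  have hq_le_one : q ≤ 1 := by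
    have hinv : (2 * Δ : ℝ)⁻¹ ≤ 1 := inv_le_one_of_one_le₀ (by linarith)
    have hinv0 : 0 ≤ (2 * Δ : ℝ)⁻¹ := by positivity
    exact mul_le_one₀ hinv (pow_nonneg (by linarith) _) (pow_le_one₀ (by linarith) (by linarith))
  have hexp : 0.363 ≤ Real.exp (-1) := by have := Real.exp_neg_one_gt_d9; linarith
  have hqk : Real.log (8 * (Δ : ℝ) ^ 3) ≤ q * k := by
    calc Real.log (8 * (Δ : ℝ) ^ 3) = 3 * (Real.log 2 + Real.log Δ) := by
          rw [show 8 * (Δ : ℝ) ^ 3 = (2 * Δ) ^ 3 by ring, Real.log_pow,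
            Real.log_mul (by norm_num) (by positivity)]
          norm_num
      _ ≤ 4.9 * Real.log Δ := three_mul_log_two_add_log_le hΔ'
      _ ≤ 27 / 2 * Real.exp (-1) * Real.log Δ := by gcongr; linarith
      _ = (2 * Δ : ℝ)⁻¹ * Real.exp (-1) * (27 * Δ * Real.log Δ) := by field_simp
      _ ≤ q * k := by gcongr; exact le_trans (by positivity) hq_lower
  calc 8 * (Δ : ℝ) ^ 3 * (1 - q) ^ k
      ≤ 8 * (Δ : ℝ) ^ 3 * Real.exp (-q) ^ k := by
        gcongr
        exact Real.one_sub_le_exp_neg q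
    _ = 8 * (Δ : ℝ) ^ 3 * Real.exp (-(q * k)) := by rw [← Real.exp_nat_mul]; ring_nf
    _ ≤ 8 * (Δ : ℝ) ^ 3 * Real.exp (-Real.log (8 * (Δ : ℝ) ^ 3)) := by gcongr
    _ = 1 := by
      rw [Real.exp_neg, Real.exp_log (by positivity), mul_inv_cancel₀ (by positivity)]

theorem eight_mul_pow_three_mul_one_sub_pow_le_one {Δ k : ℕ} (hΔ : 2 ≤ Δ)
    (hk : 27 * Δ * Real.log Δ ≤ k) :
    8 * (Δ : ℝ) ^ 3 * (1 - (2 * Δ : ℝ)⁻¹ * (1 - (2 * Δ : ℝ)⁻¹) ^ (2 * Δ - 1)) ^ k ≤ 1 := by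
  rcases hΔ.eq_or_lt with rfl | hΔ3
  · -- The bound `1 - q ≤ exp (-q)` is too weak here, but `k ≥ 54 * log 2 > 37`.
    have hk38 : 38 ≤ k := by
      have hlog := Real.log_two_gt_d9
      have : (37 : ℝ) < k := by push_cast at hk; linarith
      exact_mod_cast this
    calc _ = 64 * (229 / 256 : ℝ) ^ k := by norm_num
      _ ≤ 64 * (229 / 256 : ℝ) ^ 38 := by
        gcongr ?_ * ?_
        exact pow_le_pow_of_le_one (by norm_num) (by norm_num) hk38
      _ ≤ 1 := by norm_num
  · exact eight_mul_pow_three_mul_one_sub_pow_le_one_of_three_le hΔ3 hk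

end Numerics

section IsolatingSets

variable {V : Type*} {G : SimpleGraph V}

/-- Among the neighbors of the endpoints of `e`, the set `M` contains the vertex `a` and no other.
If every edge has its tail isolated by one of finitely many sets, the index of that set, refined by
a coloring of the heads, is an injective edge-coloring. -/
def IsolatesAt (G : SimpleGraph V) (M : Set V) (a : V) (e : Sym2 V) : Prop :=
  ∀ y ∈ e, ∀ x, G.Adj y x → (x ∈ M ↔ x = a)

theorem EdgeConflict.adj_or_adj {a b a' b' : V} (h : EdgeConflict G s(a, b) s(a', b')) :
    G.Adj b b' ∨ a ≠ a' ∧ (G.Adj a a' ∨ G.Adj a b' ∨ G.Adj b a') := by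
  obtain ⟨hne, ⟨hdisj, u, hu, v, hv, huv⟩ | ⟨x, y, z, hxy, hyz, hxz, he, he'⟩⟩ := h
  · have haa' : a ≠ a' := by rintro rfl; exact hdisj a (by simp) (by simp)
    rw [Sym2.mem_iff] at hu hv
    grind
  · have hclique : G.IsClique ({x, y, z} : Set V) := by
      simp [SimpleGraph.isClique_insert, hxy, hxz, hyz]
    have hmem {f : Sym2 V} (hf : f ∈ ({s(x, y), s(y, z), s(x, z)} : Set (Sym2 V))) {u : V}
        (hu : u ∈ f) : u ∈ ({x, y, z} : Set V) := by
      rcases hf with rfl | rfl | rfl <;> rcases Sym2.mem_iff.1 hu with rfl | rfl <;> simp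
    by_cases hbb' : b = b'
    · have haa' : a ≠ a' := by rintro rfl; exact hne (by rw [hbb'])
      exact .inr ⟨haa', .inl (hclique (hmem he (by simp)) (hmem he' (by simp)) haa')⟩
    · exact .inl (hclique (hmem he (by simp)) (hmem he' (by simp)) hbb')

theorem not_edgeConflict_of_isolatesAt {M : Set V} {a b a' b' : V} (hab : G.Adj a b)
    (hab' : G.Adj a' b') (hbb' : ¬ G.Adj b b') (hM : IsolatesAt G M a s(a, b))
    (hM' : IsolatesAt G M a' s(a', b')) : ¬ EdgeConflict G s(a, b) s(a', b') := by
  have ha : a ∈ M := (hM b (by simp) a hab.symm).2 rfl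
  have ha' : a' ∈ M := (hM' b' (by simp) a' hab'.symm).2 rfl
  intro hconf
  obtain hadj | ⟨hne, hadj | hadj | hadj⟩ := hconf.adj_or_adj
  · exact hbb' hadj
  · exact hne ((hM a (by simp) a' hadj).1 ha').symm
  · exact hne ((hM' b' (by simp) a hadj.symm).1 ha)
  · exact hne ((hM b (by simp) a' hadj).1 ha').symm

theorem injChromIndex_le_card {γ : Type*} [Fintype γ] [Nonempty γ] (c : G.edgeSet → γ)
    (hc : ∀ e e' : G.edgeSet, EdgeConflict G e e' → c e ≠ c e') :
    injChromIndex G ≤ Fintype.card γ := by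
  let extend : Sym2 V → γ := Function.extend Subtype.val c fun _ => Classical.arbitrary γ
  have hextend (e : G.edgeSet) : extend e = c e := Subtype.val_injective.extend_apply c _ e
  refine Nat.sInf_le ⟨Fintype.equivFin γ ∘ extend, fun e he e' he' hconf heq => ?_⟩
  exact hc ⟨e, he⟩ ⟨e', he'⟩ hconf <| (hextend ⟨e, he⟩).symm.trans <|
    ((Fintype.equivFin γ).injective heq).trans (hextend ⟨e', he'⟩)

theorem exists_eq_mk_and_lt {α : Type*} [LinearOrder α] (C : G.Coloring α) {e : Sym2 V}
    (he : e ∈ G.edgeSet) : ∃ a b, e = s(a, b) ∧ C b < C a := by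
  induction e using Sym2.ind with
  | _ x y =>
    rcases (C.valid he).lt_or_gt with h | h
    · exact ⟨y, x, Sym2.eq_swap, h⟩
    · exact ⟨x, y, rfl, h⟩

theorem injChromIndex_le_card_mul_card {γ κ : Type*} [Fintype γ] [Nonempty γ] [Fintype κ]
    [Nonempty κ] {a b : G.edgeSet → V} (hab : ∀ e : G.edgeSet, (e : Sym2 V) = s(a e, b e))
    (c : G.edgeSet → γ) (hc : ∀ e e', c e = c e' → ¬ G.Adj (b e) (b e')) (M : κ → Set V)
    (hM : ∀ e : G.edgeSet, ∃ t, IsolatesAt G (M t) (a e) e) :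
    injChromIndex G ≤ Fintype.card γ * Fintype.card κ := by
  choose t ht using hM
  have hadj (e : G.edgeSet) : G.Adj (a e) (b e) := by
    simpa only [hab e, SimpleGraph.mem_edgeSet] using e.2
  rw [← Fintype.card_prod]
  refine injChromIndex_le_card (fun e => (c e, t e)) fun e e' hconf heq => ?_
  obtain ⟨hcc, htt⟩ := Prod.ext_iff.1 heq
  have ht_left : IsolatesAt G (M (t e)) (a e) s(a e, b e) := hab e ▸ ht e
  have ht_right : IsolatesAt G (M (t e)) (a e') s(a e', b e') := by
    simpa only [← hab e', show t e = t e' from htt] using ht e'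
  rw [hab e, hab e'] at hconf
  exact not_edgeConflict_of_isolatesAt (hadj e) (hadj e') (hc e e' hcc) ht_left ht_right hconf

end IsolatingSets

section EndpointNeighbors

variable {V : Type*} [Fintype V] [DecidableEq V] {G : SimpleGraph V} [DecidableRel G.Adj] {Δ : ℕ}

/-- The neighbors of the endpoints of `e`; for an edge `e` this includes the endpoints. -/
def endpointNbrs (G : SimpleGraph V) [DecidableRel G.Adj] (e : Sym2 V) : Finset V :=
  e.toFinset.biUnion fun v => G.neighborFinset v

theorem mem_endpointNbrs {e : Sym2 V} {x : V} :
    x ∈ endpointNbrs G e ↔ ∃ y ∈ e, G.Adj y x := by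
  simp [endpointNbrs]

theorem isolatesAt_iff {M : Set V} {a : V} {e : Sym2 V} :
    IsolatesAt G M a e ↔ ∀ x ∈ endpointNbrs G e, (x ∈ M ↔ x = a) := by
  simp only [IsolatesAt, mem_endpointNbrs]
  grind

theorem mem_endpointNbrs_of_mem {e : Sym2 V} (he : e ∈ G.edgeSet) {a : V} (ha : a ∈ e) :
    a ∈ endpointNbrs G e := by
  obtain ⟨b, rfl⟩ := ha
  exact mem_endpointNbrs.2 ⟨b, by simp, SimpleGraph.Adj.symm he⟩

theorem card_endpointNbrs_le (hΔ : ∀ v, G.degree v ≤ Δ) (e : Sym2 V) :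
    #(endpointNbrs G e) ≤ 2 * Δ := by
  have he : #e.toFinset ≤ 2 := by rw [e.card_toFinset]; split_ifs <;> simp
  exact (card_biUnion_le_card_mul _ _ Δ fun v _ => hΔ v).trans (Nat.mul_le_mul_right Δ he)

theorem card_edgeSet_not_disjoint_endpointNbrs_le (hΔ : ∀ v, G.degree v ≤ Δ) (e : Sym2 V) :
    #{e' : G.edgeSet | ¬ Disjoint (endpointNbrs G e) (endpointNbrs G e')} ≤ 2 * Δ ^ 3 := by
  let nearEdges := (endpointNbrs G e).biUnion fun x =>
    (G.neighborFinset x).biUnion fun y => G.incidenceFinset y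
  have hnear (e' : G.edgeSet) (he' : ¬ Disjoint (endpointNbrs G e) (endpointNbrs G e')) :
      (e' : Sym2 V) ∈ nearEdges := by
    obtain ⟨x, hx, hx'⟩ := not_disjoint_iff.1 he'
    obtain ⟨y, hy, hyx⟩ := mem_endpointNbrs.1 hx'
    simp only [nearEdges, mem_biUnion, SimpleGraph.mem_neighborFinset,
      SimpleGraph.mem_incidenceFinset]
    exact ⟨x, hx, y, hyx.symm, e'.2, hy⟩
  have hincident (x : V) : #((G.neighborFinset x).biUnion fun y => G.incidenceFinset y) ≤ Δ * Δ :=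
    (card_biUnion_le_card_mul _ _ Δ fun y _ =>
      (G.card_incidenceFinset_eq_degree y).trans_le (hΔ y)).trans (Nat.mul_le_mul_right Δ (hΔ x))
  calc _ ≤ #nearEdges :=
        card_le_card_of_injOn _ (fun e' he' => hnear e' (mem_filter.1 he').2)
          Subtype.val_injective.injOn
    _ ≤ #(endpointNbrs G e) * (Δ * Δ) := card_biUnion_le_card_mul _ _ _ fun x _ => hincident x
    _ ≤ 2 * Δ * (Δ * Δ) := Nat.mul_le_mul_right _ (card_endpointNbrs_le hΔ e)
    _ = 2 * Δ ^ 3 := by ring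

end EndpointNeighbors

theorem exists_isolatesAt {V κ : Type*} [Fintype V] [Fintype κ] {G : SimpleGraph V}
    [DecidableRel G.Adj] {Δ : ℕ} (hΔ0 : 0 < Δ) (hΔ : ∀ v, G.degree v ≤ Δ) (p : I)
    (hp : 8 * (Δ : ℝ) ^ 3 * (1 - p * (1 - p) ^ (2 * Δ - 1)) ^ Fintype.card κ ≤ 1)
    (a : G.edgeSet → V) (ha : ∀ e : G.edgeSet, a e ∈ (e : Sym2 V)) :
    ∃ M : κ → Set V, ∀ e : G.edgeSet, ∃ t, IsolatesAt G (M t) (a e) e := by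
  classical
  let slice (t : κ) (e : G.edgeSet) : Finset (κ × V) := {t} ×ˢ endpointNbrs G e
  let bad (e : G.edgeSet) : Set (κ × V → Prop) :=
    ⋂ t ∈ univ, (onlyMarked (slice t e) (t, a e))ᶜ
  have hbad_dependsOn (e : G.edgeSet) :
      DependsOn (· ∈ bad e) (univ ×ˢ endpointNbrs G e : Finset (κ × V)) := by
    refine (dependsOn_mem_biInter fun t _ =>
      dependsOn_mem_compl dependsOn_mem_onlyMarked).mono ?_
    simp only [slice, Set.iUnion_subset_iff]
    exact fun t _ => coe_subset.2 (product_subset_product_left (subset_univ {t}))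
  have hbad_le (e : G.edgeSet) :
      (Measure.pi fun _ : κ × V => Ber(True, False, p)).real (bad e) ≤
        (1 - p * (1 - p) ^ (2 * Δ - 1)) ^ Fintype.card κ := by
    refine measureReal_pi_biInter_compl_onlyMarked_le (fun t u htu => ?_) (fun t => ?_)
      (fun t => ?_) univ
    · exact disjoint_product.2 (.inl (disjoint_singleton.2 htu))
    · exact mk_mem_product (mem_singleton_self t) (mem_endpointNbrs_of_mem e.2 (ha e))
    · simpa only [slice, card_product, card_singleton, one_mul] using card_endpointNbrs_le hΔ e
  have hdegree (e : G.edgeSet) : #{e' : G.edgeSet | ¬ Disjoint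
      (univ ×ˢ endpointNbrs G e : Finset (κ × V)) (univ ×ˢ endpointNbrs G e')} ≤ 2 * Δ ^ 3 := by
    refine (card_le_card (monotone_filter_right _ fun e' _ h h' => ?_)).trans
      (card_edgeSet_not_disjoint_endpointNbrs_le hΔ e)
    exact h (disjoint_product.2 (.inr h'))
  obtain ⟨ω, hω⟩ := exists_forall_notMem_of_dependsOn (fun _ => .of_discrete) hbad_dependsOn
    hbad_le hdegree (by positivity) (by push_cast; linarith)
  refine ⟨fun t => {x | ω (t, x)}, fun e => ?_⟩
  obtain ⟨t, ht⟩ : ∃ t, ω ∈ onlyMarked (slice t e) (t, a e) := by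
    simpa [bad] using hω e
  exact ⟨t, isolatesAt_iff.2 fun x hx =>
    (ht (t, x) (mk_mem_product (mem_singleton_self t) hx)).trans (by simp)⟩

theorem exists_isolatesAt_of_mul_log_le {V : Type*} [Fintype V] {G : SimpleGraph V}
    [DecidableRel G.Adj] {Δ k : ℕ} (hΔ2 : 2 ≤ Δ) (hΔ : ∀ v, G.degree v ≤ Δ)
    (hk : 27 * Δ * Real.log Δ ≤ k) (a : G.edgeSet → V)
    (ha : ∀ e : G.edgeSet, a e ∈ (e : Sym2 V)) :
    ∃ M : Fin k → Set V, ∀ e : G.edgeSet, ∃ t, IsolatesAt G (M t) (a e) e := by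
  have hp : (2 * Δ : ℝ)⁻¹ ∈ I :=
    ⟨by positivity, inv_le_one_of_one_le₀ (by exact_mod_cast (by omega : 1 ≤ 2 * Δ))⟩
  refine exists_isolatesAt (by omega) hΔ ⟨_, hp⟩ ?_ a ha
  simpa only [Fintype.card_fin] using eight_mul_pow_three_mul_one_sub_pow_le_one hΔ2 hk

theorem injChromIndex_le_of_chromaticNumber_general {V : Type*} [Fintype V] (G : SimpleGraph V)
    [DecidableRel G.Adj] {Δ χ : ℕ} (hG : G.Colorable χ) (hΔ : G.maxDegree ≤ Δ) (hχ : 2 ≤ χ)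
    (hΔ2 : 2 ≤ Δ) :
    injChromIndex G ≤ (χ - 1) * ⌈(27 : ℝ) * Δ * Real.log Δ⌉₊ := by
  obtain ⟨n, rfl⟩ : ∃ n, χ = n + 1 := ⟨χ - 1, by omega⟩
  set k := ⌈(27 : ℝ) * Δ * Real.log Δ⌉₊
  have hΔ2' : (2 : ℝ) ≤ Δ := by exact_mod_cast hΔ2
  have hk : 0 < k := Nat.ceil_pos.2 (mul_pos (by positivity) (Real.log_pos (by linarith)))
  have : NeZero n := ⟨by omega⟩
  have : NeZero k := ⟨hk.ne'⟩
  obtain ⟨C⟩ := hG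
  choose a b hab hC using fun e : G.edgeSet => exists_eq_mk_and_lt C e.2
  obtain ⟨M, hM⟩ := exists_isolatesAt_of_mul_log_le hΔ2
    (fun v => (G.degree_le_maxDegree v).trans hΔ) (Nat.le_ceil _) a
    fun e => (hab e).symm ▸ Sym2.mem_mk_left _ _
  let headColor (e : G.edgeSet) : Fin n :=
    (C (b e)).castPred ((hC e).trans_le (Fin.le_last _)).ne
  have hheads (e e' : G.edgeSet) (h : headColor e = headColor e') : ¬ G.Adj (b e) (b e') :=
    fun hadj => C.valid hadj (Fin.castPred_inj.1 h)
  simpa only [Nat.add_sub_cancel, Fintype.card_fin] using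
    injChromIndex_le_card_mul_card hab headColor hheads M hM

/-- Theorem 4 (main): if `G` has maximum degree `Δ` and chromatic number `χ` with
`2 ≤ χ ≤ Δ`, then `χ'_inj(G) ≤ (χ - 1) * ⌈27 Δ ln Δ⌉`. -/
theorem injChromIndex_le_of_chromaticNumber {V : Type*} [Fintype V] (G : SimpleGraph V)
    [DecidableRel G.Adj] (Δ χ : ℕ) (hΔ : G.maxDegree = Δ)
    (hχ : G.chromaticNumber = χ) (h2 : 2 ≤ χ) (hχΔ : χ ≤ Δ) :
    injChromIndex G ≤ (χ - 1) * ⌈(27 : ℝ) * Δ * Real.log Δ⌉₊ :=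
  injChromIndex_le_of_chromaticNumber_general G
    (SimpleGraph.chromaticNumber_le_iff_colorable.1 hχ.le) hΔ.le h2 (h2.trans hχΔ)
end

section
/- For every integer Δ ≥ 3 and every integer g ≥ 3, there exists a finite simple graph G with maximum degree at most Δ and girth at least g such that the injective chromatic index of G satisfies χ'_inj(G) ≥ Δ(Δ − 1)/(4 ln Δ). -/
open SimpleGraph

/-!
In a color class of an injective edge-coloring every edge has an endpoint on no other edge of the
class, and these private endpoints are pairwise non-adjacent. Hence `|E(G)| ≤ χ'_inj(G) α(G)`, and
it suffices to find graphs on `n` vertices with maximum degree at most `Δ`, large girth,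
`Δ n / 2 - O(1)` edges and independence number at most `b n + O(1)`, for some
`b < 2 ln Δ / (Δ - 1)`.

Take the union of `Δ` independent uniformly random perfect matchings. A set of `s` vertices contains
no edge of it with probability at most `exp (-Δ s (s - 1) / (2 n))`, and for `s ≥ b n` this beats
the number of such sets as soon as `1 < Δ b / 2 + ln b`. The expected number of short cycles,
parallel edges included, is bounded independently of `n`, so isolating their vertices costs only
`O(1)` edges.
-/

section ColorClasses

variable {V : Type*} {G : SimpleGraph V}

lemma edgeConflict_of_adj {u v p q : V} (hup : G.Adj u p) (huv : G.Adj u v) (hvq : G.Adj v q)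
    (hpv : p ≠ v) (hqu : q ≠ u) : EdgeConflict G s(u, p) s(v, q) := by
  have hu : u ∉ s(v, q) := by simp [huv.ne, hqu.symm]
  refine ⟨fun h => hu (h ▸ Sym2.mem_mk_left u p), ?_⟩
  obtain rfl | hpq := eq_or_ne p q
  · exact Or.inr ⟨u, v, p, huv, hvq, hup, by simp, by simp⟩
  · refine Or.inl ⟨?_, u, Sym2.mem_mk_left u p, v, Sym2.mem_mk_left v q, huv⟩
    rintro w hw
    obtain rfl | rfl := Sym2.mem_iff.1 hw
    · exact hu
    · simp [hpv, hpq]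

/-- A set of pairwise non-conflicting edges of `G`, that is, a possible color class of an
injective edge-coloring. -/
structure IsInjColorClass (G : SimpleGraph V) (C : Set (Sym2 V)) : Prop where
  subset_edgeSet : C ⊆ G.edgeSet
  not_edgeConflict : ∀ e ∈ C, ∀ e' ∈ C, ¬ EdgeConflict G e e'

namespace IsInjColorClass

variable {C : Set (Sym2 V)}

lemma exists_private_endpoint (hC : IsInjColorClass G C) {e : Sym2 V} (he : e ∈ C) :
    ∃ x ∈ e, ∀ e' ∈ C, x ∈ e' → e' = e := by
  induction e using Sym2.ind with
  | _ u v =>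
  by_contra! hshared
  obtain ⟨_, hup, hu, hne_up⟩ := hshared u (Sym2.mem_mk_left u v)
  obtain ⟨_, hvq, hv, hne_vq⟩ := hshared v (Sym2.mem_mk_right u v)
  obtain ⟨p, rfl⟩ := Sym2.mem_iff_exists.1 hu
  obtain ⟨q, rfl⟩ := Sym2.mem_iff_exists.1 hv
  refine hC.not_edgeConflict _ hup _ hvq (edgeConflict_of_adj (hC.subset_edgeSet hup)
    (hC.subset_edgeSet he) (hC.subset_edgeSet hvq) ?_ ?_)
  · rintro rfl
    exact hne_up rfl
  · rintro rfl
    exact hne_vq Sym2.eq_swap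

lemma not_adj_of_private (hC : IsInjColorClass G C) {e e' : Sym2 V} (he : e ∈ C) (he' : e' ∈ C)
    {x y : V} (hx : x ∈ e) (hy : y ∈ e') (hx_private : ∀ d ∈ C, x ∈ d → d = e)
    (hy_private : ∀ d ∈ C, y ∈ d → d = e') (hne : e ≠ e') : ¬ G.Adj x y := by
  intro hxy
  obtain ⟨p, rfl⟩ := Sym2.mem_iff_exists.1 hx
  obtain ⟨q, rfl⟩ := Sym2.mem_iff_exists.1 hy
  refine hC.not_edgeConflict _ he _ he' (edgeConflict_of_adj (hC.subset_edgeSet he) hxy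
    (hC.subset_edgeSet he') ?_ ?_)
  · rintro rfl
    exact hne (hy_private _ he (Sym2.mem_mk_right x p))
  · rintro rfl
    exact hne (hx_private _ he' (Sym2.mem_mk_right y q)).symm

lemma card_le_indepNum [Finite V] {C : Finset (Sym2 V)} (hC : IsInjColorClass G C) :
    C.card ≤ G.indepNum := by
  classical
  choose x hx hx_private using fun e : C => hC.exists_private_endpoint e.2
  have x_injective : Function.Injective x := fun e e' h =>
    (Subtype.ext (hx_private e e' e'.2 (h ▸ hx e'))).symm
  rw [← C.card_attach, ← Finset.card_image_of_injective _ x_injective]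
  refine IsIndepSet.card_le_indepNum ?_
  simp only [Finset.coe_image, Finset.coe_attach, Set.image_univ]
  rintro _ ⟨e, rfl⟩ _ ⟨e', rfl⟩ hne
  exact hC.not_adj_of_private e.2 e'.2 (hx e) (hx e') (hx_private e) (hx_private e')
    fun h => hne (congrArg x (Subtype.ext h))

end IsInjColorClass

lemma exists_isInjEdgeColoring_injChromIndex [Finite V] (G : SimpleGraph V) :
    ∃ f : Sym2 V → Fin (injChromIndex G), IsInjEdgeColoring G f :=
  Nat.sInf_mem (s := {k | ∃ f : Sym2 V → Fin k, IsInjEdgeColoring G f})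
    ⟨Nat.card (Sym2 V), Finite.equivFin _, fun _ _ _ _ h => (Finite.equivFin _).injective.ne h.1⟩

theorem ncard_edgeSet_le_injChromIndex_mul_indepNum [Finite V] (G : SimpleGraph V) :
    G.edgeSet.ncard ≤ injChromIndex G * G.indepNum := by
  classical
  have := Fintype.ofFinite V
  obtain ⟨f, hf⟩ := exists_isInjEdgeColoring_injChromIndex G
  have card_fiber_le (c : Fin (injChromIndex G)) :
      (G.edgeFinset.filter (f · = c)).card ≤ G.indepNum := by
    refine IsInjColorClass.card_le_indepNum ⟨fun e he => ?_, fun e he e' he' h => ?_⟩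
    · simpa using (Finset.mem_filter.1 he).1
    · simp only [Finset.coe_filter, mem_edgeFinset, Set.mem_ofPred_eq] at he he'
      exact hf e he.1 e' he'.1 h (he.2.trans he'.2.symm)
  calc G.edgeSet.ncard = G.edgeFinset.card := Set.ncard_eq_toFinset_card' _
    _ ≤ G.indepNum * (Finset.univ : Finset (Fin (injChromIndex G))).card :=
      Finset.card_le_mul_card_image_of_maps_to (f := f) (fun _ _ => Finset.mem_univ _) _
        fun c _ => card_fiber_le c
    _ = injChromIndex G * G.indepNum := by rw [Finset.card_fin, mul_comm]

end ColorClasses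

section RandomInvolutions

open Finset Equiv

variable {V : Type*}

lemma involutive_conj {t : Perm V} (ht : Function.Involutive t) (ρ : Perm V) :
    Function.Involutive (ρ⁻¹ * t * ρ : Perm V) :=
  fun x => by simp [ht (ρ x)]

/-- `W` contains no pair `{x, m x}`: viewing the involution `m` as a matching, `W` is independent
in it. -/
def IsPairFree (m : V → V) (W : Finset V) : Prop := ∀ x ∈ W, m x ∉ W

instance [DecidableEq V] (m : V → V) (W : Finset V) : Decidable (IsPairFree m W) :=
  inferInstanceAs (Decidable (∀ x ∈ W, m x ∉ W))

lemma IsPairFree.mono {m : V → V} {W W' : Finset V} (hW : IsPairFree m W) (h : W' ⊆ W) :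
    IsPairFree m W' :=
  fun x hx hmx => hW x (h hx) (h hmx)

lemma isPairFree_conj_map_iff {m : Perm V} {W : Finset V} (π : Perm V) :
    IsPairFree m (W.map π.toEmbedding) ↔ IsPairFree (π⁻¹ * m * π : Perm V) W := by
  simp only [IsPairFree, mem_map_equiv, Perm.mul_apply, Perm.inv_def]
  exact π.symm.forall_congr_left.trans (by simp)

variable [Fintype V] [DecidableEq V]

lemma card_perm_apply_eq_le {κ : Type*} [Fintype κ] {x : κ → V} (hx : Function.Injective x)
    (y : κ → V) :
    #{ρ : Perm V | ∀ i, ρ (x i) = y i} ≤ (Fintype.card V - Fintype.card κ).factorial := by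
  classical
  obtain hempty | ⟨ρ₀, hρ₀⟩ := ({ρ : Perm V | ∀ i, ρ (x i) = y i} : Finset _).eq_empty_or_nonempty
  · simp [hempty]
  replace hρ₀ : ∀ i, ρ₀ (x i) = y i := by simpa using hρ₀
  have card_compl : Fintype.card {a // a ∉ Set.range x} = Fintype.card V - Fintype.card κ := by
    rw [Fintype.card_subtype_compl, ← Fintype.card_congr (Equiv.ofInjective x hx)]
  rw [← card_compl, ← Fintype.card_perm,
    Fintype.card_congr (Perm.subtypeEquivSubtypePerm (· ∉ Set.range x)), Fintype.card_subtype]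
  refine card_le_card_of_injOn (ρ₀⁻¹ * ·) (fun ρ hρ => ?_) (mul_right_injective _).injOn
  replace hρ : ∀ i, ρ (x i) = y i := by simpa using hρ
  suffices ∀ i, (ρ₀⁻¹ * ρ) (x i) = x i by simpa using this
  intro i
  rw [Perm.mul_apply, hρ i, Perm.inv_eq_iff_eq, hρ₀ i]

lemma pow_mul_factorial_sub_le {N k : ℕ} (h : 4 * k ≤ N) :
    N ^ (2 * k) * (N - 2 * k).factorial ≤ 4 ^ k * N.factorial :=
  calc N ^ (2 * k) * (N - 2 * k).factorial
      ≤ (2 * (N + 1 - 2 * k)) ^ (2 * k) * (N - 2 * k).factorial := by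
        gcongr
        lia
    _ = 4 ^ k * ((N - 2 * k).factorial * (N + 1 - 2 * k) ^ (2 * k)) := by
        rw [mul_pow, pow_mul 2]
        ring
    _ ≤ 4 ^ k * ((N - 2 * k).factorial * N.descFactorial (2 * k)) := by
        gcongr
        exact Nat.pow_sub_le_descFactorial N (2 * k)
    _ = 4 ^ k * N.factorial := by rw [Nat.factorial_mul_descFactorial (by lia)]

lemma pow_mul_card_conj_apply_eq_le {κ : Type*} [Fintype κ] (t : Perm V) {x y : κ → V}
    (hxy : Function.Injective (Sum.elim x y)) (h : 4 * Fintype.card κ ≤ Fintype.card V) :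
    Fintype.card V ^ Fintype.card κ * #{ρ : Perm V | ∀ i, (ρ⁻¹ * t * ρ) (x i) = y i} ≤
      4 ^ Fintype.card κ * (Fintype.card V).factorial := by
  classical
  -- Once the images `u i` of the `x i` under `ρ` are chosen, those of the `y i` must be `t (u i)`.
  have union_bound : #{ρ : Perm V | ∀ i, (ρ⁻¹ * t * ρ) (x i) = y i} ≤
      Fintype.card V ^ Fintype.card κ *
        (Fintype.card V - 2 * Fintype.card κ).factorial :=
    calc #{ρ : Perm V | ∀ i, (ρ⁻¹ * t * ρ) (x i) = y i}
        ≤ #((univ : Finset (κ → V)).biUnion fun u =>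
            {ρ : Perm V | ∀ i, ρ (Sum.elim x y i) = Sum.elim u (t ∘ u) i}) := by
          refine card_le_card fun ρ hρ => ?_
          simp only [mem_filter, mem_univ, true_and, Perm.mul_apply, Perm.inv_eq_iff_eq] at hρ
          simpa using ⟨ρ ∘ x, fun _ => rfl, fun i => (hρ i).symm⟩
      _ ≤ #(univ : Finset (κ → V)) * (Fintype.card V - Fintype.card (κ ⊕ κ)).factorial :=
          card_biUnion_le_card_mul _ _ _ fun _ _ => card_perm_apply_eq_le hxy _
      _ = _ := by rw [card_univ, Fintype.card_fun, Fintype.card_sum, two_mul]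
  calc _ ≤ Fintype.card V ^ Fintype.card κ * (Fintype.card V ^ Fintype.card κ *
        (Fintype.card V - 2 * Fintype.card κ).factorial) := by gcongr
    _ = Fintype.card V ^ (2 * Fintype.card κ) *
        (Fintype.card V - 2 * Fintype.card κ).factorial := by rw [two_mul, pow_add, mul_assoc]
    _ ≤ _ := pow_mul_factorial_sub_le h

lemma card_isPairFree_conj_map (t π : Perm V) (W : Finset V) :
    #{ρ : Perm V | IsPairFree (ρ⁻¹ * t * ρ : Perm V) (W.map π.toEmbedding)} =
      #{ρ : Perm V | IsPairFree (ρ⁻¹ * t * ρ : Perm V) W} := by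
  refine card_equiv (Equiv.mulRight π) fun ρ => ?_
  simp only [mem_filter, mem_univ, true_and, isPairFree_conj_map_iff, Equiv.coe_mulRight,
    mul_inv_rev, mul_assoc]

lemma card_isPairFree_conj_insert_eq (t : Perm V) {W : Finset V} {a b : V} (ha : a ∉ W)
    (hb : b ∉ W) :
    #{ρ : Perm V | IsPairFree (ρ⁻¹ * t * ρ : Perm V) (insert b W)} =
      #{ρ : Perm V | IsPairFree (ρ⁻¹ * t * ρ : Perm V) (insert a W)} := by
  have map_swap : W.map (swap a b).toEmbedding = W := by
    rw [map_eq_image]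
    refine (image_congr fun x hx => ?_).trans image_id
    exact swap_apply_of_ne_of_ne (ne_of_mem_of_not_mem hx ha) (ne_of_mem_of_not_mem hx hb)
  rw [← card_isPairFree_conj_map t (swap a b) (insert a W), map_insert, map_swap,
    Equiv.coe_toEmbedding, swap_apply_left]

lemma IsPairFree.card_extensions_le {m : V → V} (hm : Function.Involutive m) {W : Finset V}
    (hW : IsPairFree m W) :
    #{b ∈ Wᶜ | IsPairFree m (insert b W)} ≤ Fintype.card V - 2 * #W := by
  have disjoint_image : Disjoint W (W.image m) :=
    disjoint_right.2 fun _ hb => by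
      obtain ⟨x, hx, rfl⟩ := mem_image.1 hb
      exact hW x hx
  have extensions_subset : {b ∈ Wᶜ | IsPairFree m (insert b W)} ⊆ (W ∪ W.image m)ᶜ := by
    intro b hb
    obtain ⟨hbW, hfree⟩ := mem_filter.1 hb
    rw [mem_compl, mem_union, not_or]
    refine ⟨mem_compl.1 hbW, fun hbm => ?_⟩
    obtain ⟨x, hx, rfl⟩ := mem_image.1 hbm
    exact hfree x (mem_insert_of_mem hx) (mem_insert_self _ _)
  calc _ ≤ #(W ∪ W.image m)ᶜ := card_le_card extensions_subset
    _ = Fintype.card V - 2 * #W := by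
      rw [card_compl, card_union_of_disjoint disjoint_image,
        card_image_of_injective _ hm.injective, two_mul]

-- Double counting of the pairs `(b, ρ)` with `b ∉ W` and `insert b W` pair-free for `ρ⁻¹ * t * ρ`.
lemma card_isPairFree_conj_insert_mul_le {t : Perm V} (ht : Function.Involutive t) {W : Finset V}
    {a : V} (ha : a ∉ W) :
    #{ρ : Perm V | IsPairFree (ρ⁻¹ * t * ρ : Perm V) (insert a W)} * (Fintype.card V - #W) ≤
      #{ρ : Perm V | IsPairFree (ρ⁻¹ * t * ρ : Perm V) W} * (Fintype.card V - 2 * #W) := by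
  rw [← card_compl, mul_comm]
  refine card_nsmul_le_card_nsmul (R := ℕ)
    (fun b ρ => IsPairFree (ρ⁻¹ * t * ρ : Perm V) (insert b W)) (fun b hb => ?_) fun ρ hρ => ?_
  · rw [← card_isPairFree_conj_insert_eq t ha (mem_compl.1 hb)]
    refine card_le_card fun ρ hρ => ?_
    have hfree := (mem_filter.1 hρ).2
    exact (mem_bipartiteAbove _).2
      ⟨mem_filter.2 ⟨mem_univ ρ, hfree.mono (subset_insert b W)⟩, hfree⟩
  · exact (mem_filter.1 hρ).2.card_extensions_le (involutive_conj ht ρ)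

lemma sub_two_mul_le_sub_mul_exp {N w : ℝ} (hw : 0 ≤ w) (hwN : w < N) :
    N - 2 * w ≤ (N - w) * Real.exp (-(w / N)) :=
  have hN : 0 < N := hw.trans_lt hwN
  calc N - 2 * w ≤ N - 2 * w + w ^ 2 / N := le_add_of_nonneg_right (by positivity)
    _ = (N - w) * (1 - w / N) := by field
    _ ≤ (N - w) * Real.exp (-(w / N)) :=
      mul_le_mul_of_nonneg_left (Real.one_sub_le_exp_neg _) (sub_nonneg.2 hwN.le)

theorem card_isPairFree_conj_le {t : Perm V} (ht : Function.Involutive t) (W : Finset V) :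
    (#{ρ : Perm V | IsPairFree (ρ⁻¹ * t * ρ : Perm V) W} : ℝ) ≤
      (Fintype.card V).factorial * Real.exp (-(#W * (#W - 1) / (2 * Fintype.card V))) := by
  induction W using Finset.induction_on with
  | empty =>
    simpa [← Fintype.card_perm] using card_le_univ (α := Perm V) _
  | insert a W ha ih =>
    have hWV : #W < Fintype.card V := card_lt_univ_of_notMem ha
    set N : ℝ := (Fintype.card V : ℝ)
    set w : ℝ := (#W : ℝ)
    have hwN : w < N := Nat.cast_lt.2 hWV
    have step : (#{ρ : Perm V | IsPairFree (ρ⁻¹ * t * ρ : Perm V) (insert a W)} : ℝ) * (N - w) ≤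
        #{ρ : Perm V | IsPairFree (ρ⁻¹ * t * ρ : Perm V) W} * Real.exp (-(w / N)) * (N - w) := by
      have hsub : ((Fintype.card V - 2 * #W : ℕ) : ℝ) ≤ (N - w) * Real.exp (-(w / N)) := by
        obtain h | h := le_total (2 * #W) (Fintype.card V)
        · rw [Nat.cast_sub h, Nat.cast_mul, Nat.cast_two]
          exact sub_two_mul_le_sub_mul_exp (Nat.cast_nonneg _) hwN
        · rw [Nat.sub_eq_zero_of_le h, Nat.cast_zero]
          exact mul_nonneg (sub_nonneg.2 hwN.le) (Real.exp_nonneg _)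
      have hcount := (Nat.cast_le (α := ℝ)).2 (card_isPairFree_conj_insert_mul_le ht ha)
      rw [Nat.cast_mul, Nat.cast_mul, Nat.cast_sub hWV.le] at hcount
      calc _ ≤ _ := hcount
        _ ≤ _ * ((N - w) * Real.exp (-(w / N))) :=
          mul_le_mul_of_nonneg_left hsub (Nat.cast_nonneg _)
        _ = _ := by ring
    calc (#{ρ : Perm V | IsPairFree (ρ⁻¹ * t * ρ : Perm V) (insert a W)} : ℝ)
        ≤ #{ρ : Perm V | IsPairFree (ρ⁻¹ * t * ρ : Perm V) W} * Real.exp (-(w / N)) :=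
          le_of_mul_le_mul_right step (sub_pos.2 hwN)
      _ ≤ (Fintype.card V).factorial * Real.exp (-(w * (w - 1) / (2 * N))) *
          Real.exp (-(w / N)) := by gcongr
      _ = _ := by
        rw [mul_assoc, ← Real.exp_add, card_insert_of_notMem ha, Nat.cast_succ]
        congr 2
        field

end RandomInvolutions

section ColoredCycles

open Finset Equiv

variable {V ι : Type*}

/-- A closed walk along the distinct vertices `v 0, …, v l`, whose `i`-th step applies the matching
`σ (c i)` and whose cyclically consecutive colors differ. Parallel edges give such a cycle with
two vertices. -/
structure IsColoredCycle (σ : ι → Perm V) {l : ℕ} (v : Fin (l + 1) → V) (c : Fin (l + 1) → ι) :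
    Prop where
  injective : Function.Injective v
  apply_eq : ∀ i, σ (c i) (v i) = v (i + 1)
  color_ne : ∀ i, c (i + 1) ≠ c i

lemma IsColoredCycle.injective_sumElim_fiber {σ : ι → Perm V} {l : ℕ} {v : Fin (l + 1) → V}
    {c : Fin (l + 1) → ι} (h : IsColoredCycle σ v c) (a : ι) :
    Function.Injective
      (Sum.elim (fun i : {i // c i = a} => v i) (fun i : {i // c i = a} => v (i + 1))) := by
  refine (h.injective.comp Subtype.val_injective).sumElim
    ((h.injective.comp (add_left_injective 1)).comp Subtype.val_injective) ?_
  rintro ⟨i, hi⟩ ⟨j, hj⟩ hij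
  obtain rfl : i = j + 1 := h.injective hij
  exact h.color_ne j (hi.trans hj.symm)

/-- The family of conjugates of `t` by the permutations `r a`. If `t` is a fixed-point-free
involution and `r` is uniformly random, these are independent uniformly random perfect matchings,
indexed by the colors `a`. -/
def conjFamily (t : Perm V) (r : ι → Perm V) : ι → Perm V := fun a => (r a)⁻¹ * t * r a

lemma involutive_conjFamily {t : Perm V} (ht : Function.Involutive t) (r : ι → Perm V) (a : ι) :
    Function.Involutive (conjFamily t r a) :=
  involutive_conj ht (r a)

lemma conjFamily_apply_ne {t : Perm V} (hfix : ∀ x, t x ≠ x) (r : ι → Perm V) (a : ι) (x : V) :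
    conjFamily t r a x ≠ x := by
  rw [conjFamily, Perm.mul_apply, Perm.mul_apply, Ne, Perm.inv_eq_iff_eq]
  exact hfix (r a x)

variable [Fintype V]

open Classical in
/-- The starting points of the colored cycles with at most `g` vertices. -/
noncomputable def shortCycleVertices [Fintype ι] (σ : ι → Perm V) (g : ℕ) : Finset V :=
  (range g).biUnion fun l =>
    (univ.filter fun p : (Fin (l + 1) → V) × (Fin (l + 1) → ι) =>
      IsColoredCycle σ p.1 p.2).image (·.1 0)

variable [Fintype ι]

lemma IsColoredCycle.mem_shortCycleVertices {σ : ι → Perm V} {l g : ℕ} {v : Fin (l + 1) → V}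
    {c : Fin (l + 1) → ι} (h : IsColoredCycle σ v c) (hl : l < g) :
    v 0 ∈ shortCycleVertices σ g := by
  classical
  exact mem_biUnion.2 ⟨l, mem_range.2 hl,
    mem_image.2 ⟨(v, c), mem_filter.2 ⟨mem_univ _, h⟩, rfl⟩⟩

open Classical in
lemma card_shortCycleVertices_le (σ : ι → Perm V) (g : ℕ) :
    #(shortCycleVertices σ g) ≤ ∑ l ∈ range g,
      #{p : (Fin (l + 1) → V) × (Fin (l + 1) → ι) | IsColoredCycle σ p.1 p.2} :=
  card_biUnion_le.trans (sum_le_sum fun _ _ => card_image_le)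

open Classical in
lemma pow_mul_card_isColoredCycle_conjFamily_le (t : Perm V) {l : ℕ} (v : Fin (l + 1) → V)
    (c : Fin (l + 1) → ι) (h : 4 * (l + 1) ≤ Fintype.card V) :
    Fintype.card V ^ (l + 1) * #{r : ι → Perm V | IsColoredCycle (conjFamily t r) v c} ≤
      4 ^ (l + 1) * (Fintype.card V).factorial ^ Fintype.card ι := by
  obtain hempty | ⟨r₀, hr₀⟩ :=
    ({r : ι → Perm V | IsColoredCycle (conjFamily t r) v c} : Finset _).eq_empty_or_nonempty
  · simp [hempty]
  replace hr₀ : IsColoredCycle (conjFamily t r₀) v c := (mem_filter.1 hr₀).2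
  have sum_card_fiber : ∑ a, Fintype.card {i // c i = a} = l + 1 := by
    rw [← Fintype.card_sigma, Fintype.card_congr (Equiv.sigmaFiberEquiv c), Fintype.card_fin]
  have card_fiber_le (a : ι) : 4 * Fintype.card {i // c i = a} ≤ Fintype.card V := by
    have := Fintype.card_subtype_le (c · = a)
    rw [Fintype.card_fin] at this
    lia
  let R (a : ι) : Finset (Perm V) :=
    {ρ | ∀ i : {i // c i = a}, (ρ⁻¹ * t * ρ) (v i) = v (i + 1)}
  have subset_piFinset :
      ({r : ι → Perm V | IsColoredCycle (conjFamily t r) v c} : Finset _) ⊆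
        Fintype.piFinset R := by
    intro r hr
    refine Fintype.mem_piFinset.2 fun a => mem_filter.2 ⟨mem_univ _, ?_⟩
    rintro ⟨i, rfl⟩
    exact (mem_filter.1 hr).2.apply_eq i
  calc _ ≤ Fintype.card V ^ (l + 1) * ∏ a, #(R a) := by
        rw [← Fintype.card_piFinset]
        gcongr
    _ = ∏ a, Fintype.card V ^ Fintype.card {i // c i = a} * #(R a) := by
        rw [prod_mul_distrib, prod_pow_eq_pow_sum, sum_card_fiber]
    _ ≤ ∏ a : ι, 4 ^ Fintype.card {i // c i = a} * (Fintype.card V).factorial := by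
        refine prod_le_prod' fun a _ => ?_
        exact pow_mul_card_conj_apply_eq_le t (hr₀.injective_sumElim_fiber a) (card_fiber_le a)
    _ = 4 ^ (l + 1) * (Fintype.card V).factorial ^ Fintype.card ι := by
        rw [prod_mul_distrib, prod_pow_eq_pow_sum, sum_card_fiber, prod_const, card_univ]

open Classical in
lemma sum_card_isColoredCycle_conjFamily_le (t : Perm V) {l : ℕ}
    (h : 4 * (l + 1) ≤ Fintype.card V) :
    ∑ r : ι → Perm V,
        #{p : (Fin (l + 1) → V) × (Fin (l + 1) → ι) | IsColoredCycle (conjFamily t r) p.1 p.2} ≤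
      (4 * Fintype.card ι) ^ (l + 1) * (Fintype.card V).factorial ^ Fintype.card ι := by
  have hpos : 0 < Fintype.card V ^ (l + 1) := pow_pos (by lia) _
  refine Nat.le_of_mul_le_mul_left ?_ hpos
  calc _ = ∑ p : (Fin (l + 1) → V) × (Fin (l + 1) → ι), Fintype.card V ^ (l + 1) *
        #{r : ι → Perm V | IsColoredCycle (conjFamily t r) p.1 p.2} := by
        rw [← mul_sum]
        congr 1
        exact sum_card_bipartiteAbove_eq_sum_card_bipartiteBelow
          fun (r : ι → Perm V) (p : (Fin (l + 1) → V) × (Fin (l + 1) → ι)) =>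
            IsColoredCycle (conjFamily t r) p.1 p.2
    _ ≤ ∑ _p : (Fin (l + 1) → V) × (Fin (l + 1) → ι),
        4 ^ (l + 1) * (Fintype.card V).factorial ^ Fintype.card ι :=
        sum_le_sum fun p _ => pow_mul_card_isColoredCycle_conjFamily_le t p.1 p.2 h
    _ = _ := by
        rw [sum_const, card_univ, Fintype.card_prod, Fintype.card_fun, Fintype.card_fun,
          Fintype.card_fin, smul_eq_mul, mul_pow]
        ring

open Classical in
theorem sum_card_shortCycleVertices_conjFamily_le (t : Perm V) {g : ℕ}
    (h : 4 * g ≤ Fintype.card V) :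
    ∑ r : ι → Perm V, #(shortCycleVertices (conjFamily t r) g) ≤
      (∑ l ∈ range g, (4 * Fintype.card ι) ^ (l + 1)) *
        (Fintype.card V).factorial ^ Fintype.card ι := by
  calc _ ≤ _ := sum_le_sum fun r _ => card_shortCycleVertices_le (conjFamily t r) g
    _ = _ := sum_comm
    _ ≤ _ := by
      rw [sum_mul]
      refine sum_le_sum fun l hl => sum_card_isColoredCycle_conjFamily_le t ?_
      have := mem_range.1 hl
      lia

open Classical in
lemma sum_card_forall_isPairFree_conjFamily_le {t : Perm V} (ht : Function.Involutive t) (s : ℕ) :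
    ∑ S ∈ (univ : Finset V).powersetCard s,
        (#{r : ι → Perm V | ∀ a, IsPairFree (conjFamily t r a) S} : ℝ) ≤
      (Fintype.card V).choose s * Real.exp (-(s * (s - 1) / (2 * Fintype.card V))) ^
        Fintype.card ι * (Fintype.card V).factorial ^ Fintype.card ι := by
  have card_eq_pow (S : Finset V) :
      #{r : ι → Perm V | ∀ a, IsPairFree (conjFamily t r a) S} =
        #{ρ : Perm V | IsPairFree (ρ⁻¹ * t * ρ : Perm V) S} ^ Fintype.card ι := by
    rw [← card_univ (α := ι), ← prod_const, ← Fintype.card_piFinset]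
    refine congrArg card (Finset.ext fun r => ?_)
    rw [Fintype.mem_piFinset, mem_filter_univ]
    exact forall_congr' fun a => by rw [mem_filter_univ, conjFamily]
  calc _ ≤ ∑ _S ∈ (univ : Finset V).powersetCard s, ((Fintype.card V).factorial *
        Real.exp (-(s * (s - 1) / (2 * Fintype.card V)))) ^ Fintype.card ι := by
        refine sum_le_sum fun S hS => ?_
        rw [card_eq_pow, Nat.cast_pow, ← (mem_powersetCard.1 hS).2]
        gcongr
        exact card_isPairFree_conj_le ht S
    _ = _ := by
        rw [sum_const, card_powersetCard, card_univ, nsmul_eq_mul, mul_pow]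
        ring

lemma exists_le_two_mul_and_eq_zero {α : Type*} [Fintype α] {f h : α → ℕ} {C : ℕ}
    (hf : ∑ a, f a ≤ C * Fintype.card α) (hh : 2 * ∑ a, h a < Fintype.card α) :
    ∃ a, f a ≤ 2 * C ∧ h a = 0 := by
  by_contra! hbad
  have weight_le (a : α) : 2 * C + 1 ≤ f a + (2 * C + 1) * h a := by
    obtain hle | hlt := le_or_gt (f a) (2 * C)
    · have := Nat.mul_le_mul_left (2 * C + 1) (Nat.one_le_iff_ne_zero.2 (hbad a hle))
      lia
    · lia
  have := sum_le_sum fun a (_ : a ∈ univ) => weight_le a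
  rw [sum_const, card_univ, smul_eq_mul, sum_add_distrib, ← mul_sum] at this
  nlinarith

theorem exists_conjFamily_few_short_cycles {t : Perm V} (ht : Function.Involutive t) {g s : ℕ}
    (hg : 4 * g ≤ Fintype.card V)
    (hs : (Fintype.card V).choose s * Real.exp (-(s * (s - 1) / (2 * Fintype.card V))) ^
      Fintype.card ι < 1 / 2) :
    ∃ r : ι → Perm V,
      #(shortCycleVertices (conjFamily t r) g) ≤
        2 * ∑ l ∈ range g, (4 * Fintype.card ι) ^ (l + 1) ∧
      ∀ S : Finset V, #S = s → ∃ a, ¬ IsPairFree (conjFamily t r a) S := by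
  classical
  have card_families :
      Fintype.card (ι → Perm V) = (Fintype.card V).factorial ^ Fintype.card ι := by
    rw [Fintype.card_fun, Fintype.card_perm]
  have sum_free_lt : 2 * ∑ r : ι → Perm V, #{S ∈ (univ : Finset V).powersetCard s |
      ∀ a, IsPairFree (conjFamily t r a) S} < Fintype.card (ι → Perm V) := by
    have hcomm := sum_card_bipartiteAbove_eq_sum_card_bipartiteBelow
      (s := (univ : Finset (ι → Perm V))) (t := (univ : Finset V).powersetCard s)
      fun r S => ∀ a, IsPairFree (conjFamily t r a) S
    have hle := sum_card_forall_isPairFree_conjFamily_le (ι := ι) ht s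
    have hpos : (0 : ℝ) < (Fintype.card V).factorial ^ Fintype.card ι := by positivity
    simp only [bipartiteAbove, bipartiteBelow] at hcomm
    rw [hcomm, card_families, ← Nat.cast_lt (α := ℝ)]
    push_cast
    linarith [mul_lt_mul_of_pos_right hs hpos]
  obtain ⟨r, hshort, hnone⟩ := exists_le_two_mul_and_eq_zero
    (card_families ▸ sum_card_shortCycleVertices_conjFamily_le (ι := ι) t hg) sum_free_lt
  refine ⟨r, hshort, fun S hS => ?_⟩
  by_contra! hfree
  exact notMem_empty S
    (card_eq_zero.1 hnone ▸ mem_filter.2 ⟨mem_powersetCard.2 ⟨subset_univ S, hS⟩, hfree⟩)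

end ColoredCycles

section PrunedGraph

open Finset Equiv

variable {V ι : Type*}

/-- The union of the matchings `σ a`, as a simple graph. -/
def involutionGraph (σ : ι → Perm V) : SimpleGraph V :=
  SimpleGraph.fromRel fun u v => ∃ a, σ a u = v

lemma involutionGraph_adj {σ : ι → Perm V} (hσ : ∀ a, Function.Involutive (σ a))
    (hfix : ∀ a x, σ a x ≠ x) {u v : V} : (involutionGraph σ).Adj u v ↔ ∃ a, σ a u = v := by
  rw [involutionGraph, SimpleGraph.fromRel_adj]
  constructor
  · rintro ⟨-, h | ⟨a, rfl⟩⟩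
    · exact h
    · exact ⟨a, hσ a v⟩
  · rintro ⟨a, rfl⟩
    exact ⟨(hfix a u).symm, Or.inl ⟨a, rfl⟩⟩

lemma exists_isColoredCycle_of_adj {σ : ι → Perm V} (hσ : ∀ a, Function.Involutive (σ a))
    (hfix : ∀ a x, σ a x ≠ x) {l : ℕ} (hl : 2 ≤ l) {v : Fin (l + 1) → V}
    (hv : Function.Injective v) (hadj : ∀ i, (involutionGraph σ).Adj (v i) (v (i + 1))) :
    ∃ c, IsColoredCycle σ v c := by
  choose c hc using fun i => (involutionGraph_adj hσ hfix).1 (hadj i)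
  refine ⟨c, hv, hc, fun i hcolor => ?_⟩
  have two_steps_back : v (i + 1 + 1) = v i := by rw [← hc (i + 1), hcolor, ← hc i, hσ]
  have two_eq_zero : (1 + 1 : Fin (l + 1)) = 0 := by
    simpa [add_assoc] using hv two_steps_back
  obtain ⟨l, rfl⟩ := Nat.exists_eq_add_of_le' hl
  exact absurd (congrArg Fin.val two_eq_zero) (by simp [Fin.val_add, Nat.mod_eq_of_lt])

lemma isColoredCycle_of_apply_eq_apply {σ : ι → Perm V} (hσ : ∀ a, Function.Involutive (σ a))
    (hfix : ∀ a x, σ a x ≠ x) {a b : ι} (hab : a ≠ b) {u : V} (hu : σ a u = σ b u) :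
    IsColoredCycle σ ![u, σ a u] ![a, b] where
  injective := by
    rw [List.nodup_ofFn.symm]
    simpa using (hfix a u).symm
  apply_eq := Fin.forall_fin_two.2 ⟨rfl, (congrArg (σ b) hu).trans (hσ b u)⟩
  color_ne := Fin.forall_fin_two.2 ⟨hab.symm, hab⟩

variable [Fintype V] [Fintype ι]

/-- The union of the matchings `σ a` after isolating every vertex on a colored cycle with at most
`g` vertices. -/
noncomputable def prunedGraph (σ : ι → Perm V) (g : ℕ) : SimpleGraph V :=
  ((involutionGraph σ).induce (shortCycleVertices σ g : Set V)ᶜ).spanningCoe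

variable {σ : ι → Perm V} {g : ℕ}

lemma prunedGraph_adj (hσ : ∀ a, Function.Involutive (σ a)) (hfix : ∀ a x, σ a x ≠ x) {u v : V} :
    (prunedGraph σ g).Adj u v ↔
      u ∉ shortCycleVertices σ g ∧ v ∉ shortCycleVertices σ g ∧ ∃ a, σ a u = v := by
  rw [← involutionGraph_adj hσ hfix]
  simp [prunedGraph, and_left_comm, and_comm]

lemma ncard_neighborSet_prunedGraph_le (hσ : ∀ a, Function.Involutive (σ a))
    (hfix : ∀ a x, σ a x ≠ x) (u : V) :
    ((prunedGraph σ g).neighborSet u).ncard ≤ Fintype.card ι :=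
  calc _ ≤ (Set.range fun a => σ a u).ncard :=
        Set.ncard_le_ncard fun _ hv => ((prunedGraph_adj hσ hfix).1 hv).2.2
    _ ≤ (Set.univ : Set ι).ncard := Set.image_univ ▸ Set.ncard_image_le
    _ = Fintype.card ι := by rw [Set.ncard_univ, Nat.card_eq_fintype_card]

lemma lt_egirth_prunedGraph (hσ : ∀ a, Function.Involutive (σ a)) (hfix : ∀ a x, σ a x ≠ x) :
    (g : ℕ∞) < (prunedGraph σ g).egirth := by
  rw [← ENat.add_one_le_iff (ENat.natCast_ne_top g), SimpleGraph.le_egirth]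
  intro u w hw
  by_contra! hlen
  have hlen : w.length < g + 1 := by exact_mod_cast hlen
  obtain ⟨l, hl⟩ := Nat.exists_eq_add_of_le' (Nat.le_of_succ_le hw.three_le_length)
  have hl2 : 2 ≤ l + 1 := by have := hw.three_le_length; lia
  obtain ⟨f⟩ := (SimpleGraph.cycleGraph_isContained_iff (by lia)).2 ⟨u, w, hw, hl⟩
  have hadj (i : Fin (l + 2)) : (prunedGraph σ g).Adj (f i) (f (i + 1)) :=
    f.toHom.map_adj (SimpleGraph.cycleGraph_adj.2 (Or.inr (add_sub_cancel_left i 1)))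
  obtain ⟨c, hc⟩ := exists_isColoredCycle_of_adj hσ hfix hl2 f.injective
    fun i => SimpleGraph.spanningCoe_induce_le _ _ (hadj i)
  exact ((prunedGraph_adj hσ hfix).1 (hadj 0)).1 (hc.mem_shortCycleVertices (by lia))

open Classical in
lemma card_arcs_prunedGraph_le (hσ : ∀ a, Function.Involutive (σ a)) (hfix : ∀ a x, σ a x ≠ x)
    (hg : 2 ≤ g) :
    #{p : V × ι | p.1 ∉ shortCycleVertices σ g ∧ σ p.2 p.1 ∉ shortCycleVertices σ g} ≤
      2 * (prunedGraph σ g).edgeSet.ncard := by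
  rw [Set.ncard_eq_toFinset_card', ← SimpleGraph.edgeFinset,
    ← SimpleGraph.dart_card_eq_twice_card_edges, ← Fintype.card_subtype]
  refine Fintype.card_le_of_injective (fun p => (⟨(p.1.1, σ p.1.2 p.1.1),
    (prunedGraph_adj hσ hfix).2 ⟨p.2.1, p.2.2, _, rfl⟩⟩ : (prunedGraph σ g).Dart)) ?_
  rintro ⟨⟨u, a⟩, hu, _⟩ ⟨⟨u', b⟩, _⟩ hdarts
  obtain ⟨rfl, hcolors⟩ := Prod.mk.inj (congrArg SimpleGraph.Dart.toProd hdarts)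
  rw [Subtype.mk.injEq, Prod.mk.injEq]
  refine ⟨rfl, of_not_not fun hab => hu ?_⟩
  exact (isColoredCycle_of_apply_eq_apply hσ hfix hab hcolors).mem_shortCycleVertices hg

lemma card_mul_card_le_ncard_edgeSet_prunedGraph (hσ : ∀ a, Function.Involutive (σ a))
    (hfix : ∀ a x, σ a x ≠ x) (hg : 2 ≤ g) :
    Fintype.card V * Fintype.card ι ≤ 2 * (prunedGraph σ g).edgeSet.ncard +
      2 * (#(shortCycleVertices σ g) * Fintype.card ι) := by
  classical
  set B := shortCycleVertices σ g
  set kept : Finset (V × ι) := {p | p.1 ∉ B ∧ σ p.2 p.1 ∉ B}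
  set arcsFromB : Finset (V × ι) := B ×ˢ univ
  set arcsIntoB : Finset (V × ι) := arcsFromB.image fun p => (σ p.2 p.1, p.2)
  have card_arcsFromB : #arcsFromB = #B * Fintype.card ι := by rw [card_product, card_univ]
  have univ_subset : univ ⊆ kept ∪ (arcsFromB ∪ arcsIntoB) := by
    rintro ⟨u, a⟩ -
    simp only [mem_union]
    by_cases hu : u ∈ B
    · exact Or.inr (Or.inl (mem_product.2 ⟨hu, mem_univ a⟩))
    by_cases hau : σ a u ∈ B
    · refine Or.inr (Or.inr (mem_image.2 ⟨(σ a u, a), mem_product.2 ⟨hau, mem_univ a⟩, ?_⟩))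
      rw [hσ a u]
    · exact Or.inl (mem_filter.2 ⟨mem_univ _, hu, hau⟩)
  calc Fintype.card V * Fintype.card ι = #(univ : Finset (V × ι)) := by
        rw [card_univ, Fintype.card_prod]
    _ ≤ #kept + (#arcsFromB + #arcsIntoB) := (card_le_card univ_subset).trans <|
        (card_union_le _ _).trans (Nat.add_le_add_left (card_union_le _ _) _)
    _ ≤ 2 * (prunedGraph σ g).edgeSet.ncard + (#arcsFromB + #arcsFromB) :=
        add_le_add (card_arcs_prunedGraph_le hσ hfix hg) (Nat.add_le_add_left card_image_le _)
    _ = _ := by rw [← two_mul, card_arcsFromB]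

lemma indepNum_prunedGraph_lt (hσ : ∀ a, Function.Involutive (σ a)) (hfix : ∀ a x, σ a x ≠ x)
    {s : ℕ} (hs : ∀ S : Finset V, #S = s → ∃ a, ¬ IsPairFree (σ a) S) :
    (prunedGraph σ g).indepNum < s + #(shortCycleVertices σ g) := by
  classical
  obtain ⟨S, hS⟩ := (prunedGraph σ g).exists_isNIndepSet_indepNum
  by_contra! hle
  rw [← hS.card_eq] at hle
  obtain ⟨T, hTS, hT⟩ := exists_subset_card_eq
    ((Nat.le_sub_of_add_le hle).trans (le_card_sdiff (shortCycleVertices σ g) S))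
  obtain ⟨a, ha⟩ := hs T hT
  simp only [IsPairFree, not_forall, not_not] at ha
  obtain ⟨x, hx, hax⟩ := ha
  obtain ⟨hxS, hxB⟩ := mem_sdiff.1 (hTS hx)
  obtain ⟨haxS, haxB⟩ := mem_sdiff.1 (hTS hax)
  exact hS.isIndepSet hxS haxS (hfix a x).symm ((prunedGraph_adj hσ hfix).2 ⟨hxB, haxB, a, rfl⟩)

end PrunedGraph

section Asymptotics

open Filter

lemma choose_le_exp_mul_one_sub_log {n s : ℕ} {b : ℝ} (hb : 0 < b) (hs : b * n ≤ s) :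
    (n.choose s : ℝ) ≤ Real.exp (s * (1 - Real.log b)) := by
  have hn : (n : ℝ) ≤ s * b⁻¹ := by rwa [← div_eq_mul_inv, le_div_iff₀' hb]
  calc (n.choose s : ℝ) ≤ (n : ℝ) ^ s / s.factorial := Nat.choose_le_pow_div s n
    _ ≤ (s * b⁻¹) ^ s / s.factorial := by gcongr
    _ = (s : ℝ) ^ s / s.factorial * b⁻¹ ^ s := by ring
    _ ≤ Real.exp s * b⁻¹ ^ s := by
      gcongr
      exact Real.pow_div_factorial_le_exp _ s.cast_nonneg s
    _ = Real.exp (s * (1 - Real.log b)) := by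
      rw [← Real.exp_log (inv_pos.2 hb), Real.log_inv, ← Real.exp_nat_mul, ← Real.exp_add]
      ring_nf

lemma choose_mul_exp_pow_le {n s : ℕ} (D : ℕ) {b : ℝ} (hn : 0 < n) (hb : 0 < b)
    (hs : b * n ≤ s) :
    n.choose s * Real.exp (-(s * (s - 1) / (2 * n))) ^ D ≤
      Real.exp (-(s * (D * b / 2 + Real.log b - 1 - D / (2 * n)))) := by
  have hn' : (0 : ℝ) < n := Nat.cast_pos.2 hn
  have hbs : D * b / 2 ≤ D * (s / n) / 2 := by
    gcongr
    rwa [le_div_iff₀ hn']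
  calc _ ≤ Real.exp (s * (1 - Real.log b)) * Real.exp (-(s * (s - 1) / (2 * n))) ^ D := by
        gcongr
        exact choose_le_exp_mul_one_sub_log hb hs
    _ = Real.exp (-(s * (D * (s / n) / 2 + Real.log b - 1 - D / (2 * n)))) := by
        rw [← Real.exp_nat_mul, ← Real.exp_add]
        congr 1
        field
    _ ≤ _ := by gcongr

lemma eventually_choose_mul_exp_pow_lt_half {D : ℕ} {b : ℝ} (hb : 0 < b)
    (h : 1 < D * b / 2 + Real.log b) :
    ∀ᶠ n : ℕ in atTop, ∀ s : ℕ, b * n ≤ s →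
      n.choose s * Real.exp (-(s * (s - 1) / (2 * n))) ^ D < 1 / 2 := by
  obtain ⟨d, hd⟩ : ∃ d, d = D * b / 2 + Real.log b - 1 := ⟨_, rfl⟩
  have hd_pos : 0 < d := by linarith
  have tendsto_cast_mul {k : ℝ} (hk : 0 < k) : Tendsto (fun n : ℕ => k * n) atTop atTop :=
    tendsto_natCast_atTop_atTop.const_mul_atTop hk
  filter_upwards [eventually_gt_atTop 0, (tendsto_cast_mul hd_pos).eventually_ge_atTop (D : ℝ),
    (tendsto_cast_mul (mul_pos hb hd_pos)).eventually_ge_atTop 2] with n hn hDn hbdn s hs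
  have hDn_div : D / (2 * n) ≤ d / 2 := by
    rw [div_le_iff₀ (by positivity)]
    linarith
  have one_le : 1 ≤ s * (d - D / (2 * n)) :=
    calc 1 ≤ b * n * (d / 2) := by linarith
      _ ≤ s * (d - D / (2 * n)) := by
        gcongr
        linarith
  calc _ ≤ Real.exp (-(s * (d - D / (2 * n)))) := hd ▸ choose_mul_exp_pow_le D hn hb hs
    _ ≤ Real.exp (-1) := by gcongr
    _ < 1 / 2 := by
      rw [Real.exp_neg, one_div]
      exact inv_strictAnti₀ two_pos (by linarith [Real.exp_one_gt_d9])

lemma one_lt_mul_log_add_log_log {x : ℝ} (hx : 3 ≤ x) :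
    1 < x * (2 * Real.log x / (x - 1)) / 2 + Real.log (2 * Real.log x / (x - 1)) := by
  have one_lt_log : 1 < Real.log x := by
    rw [Real.lt_log_iff_exp_lt (by linarith)]
    linarith [Real.exp_one_lt_d9]
  have hsplit : x * (2 * Real.log x / (x - 1)) / 2 + Real.log (2 * Real.log x / (x - 1)) =
      Real.log (2 * Real.log x) + Real.log (x / (x - 1)) + Real.log x / (x - 1) := by
    rw [Real.log_div (by linarith) (by linarith), Real.log_div (by linarith) (by linarith)]
    have : x - 1 ≠ 0 := by linarith
    field
  have hratio : 1 / x ≤ Real.log (x / (x - 1)) := by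
    have := Real.one_sub_inv_le_log_of_pos (x := x / (x - 1)) (by apply div_pos <;> linarith)
    refine le_of_eq_of_le ?_ this
    field
  have hlast : 1 / (x - 1) ≤ Real.log x / (x - 1) := by
    gcongr
    linarith
  rw [hsplit]
  obtain hx4 | hx4 := lt_or_ge x 4
  · have hlog : Real.log 2 ≤ Real.log (2 * Real.log x) := Real.log_le_log two_pos (by linarith)
    have h1 : 1 / 4 ≤ 1 / x := one_div_le_one_div_of_le (by linarith) hx4.le
    have h2 : 1 / 3 ≤ 1 / (x - 1) := one_div_le_one_div_of_le (by linarith) (by linarith)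
    linarith [Real.log_two_gt_d9]
  · have hlog_four : 2 * Real.log 2 ≤ Real.log x := by
      rw [← Real.log_rpow two_pos]
      exact Real.log_le_log (by positivity) (by norm_num; exact hx4)
    have hlog : 1 < Real.log (2 * Real.log x) := by
      rw [Real.lt_log_iff_exp_lt (by linarith)]
      linarith [Real.exp_one_lt_d9, Real.log_two_gt_d9]
    have : 0 < 1 / x := by positivity
    have : 0 < 1 / (x - 1) := one_div_pos.2 (by linarith)
    linarith

lemma exists_pos_lt_one_lt_mul_add_log {x : ℝ} (hx : 3 ≤ x) :
    ∃ b, 0 < b ∧ b < 2 * Real.log x / (x - 1) ∧ 1 < x * b / 2 + Real.log b := by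
  set b₀ := 2 * Real.log x / (x - 1)
  have hb₀ : 0 < b₀ := div_pos (mul_pos two_pos (Real.log_pos (by linarith))) (by linarith)
  have hcont : ContinuousAt (fun b => x * b / 2 + Real.log b) b₀ := by
    fun_prop (disch := exact hb₀.ne')
  have hnear : ∀ᶠ b in nhdsWithin b₀ (Set.Iio b₀), 0 < b ∧ 1 < x * b / 2 + Real.log b :=
    nhdsWithin_le_nhds <| (lt_mem_nhds hb₀).and <|
      hcont.eventually (lt_mem_nhds (one_lt_mul_log_add_log_log hx))
  obtain ⟨b, ⟨hb_pos, hb⟩, hb_lt⟩ := (hnear.and self_mem_nhdsWithin).exists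
  exact ⟨b, hb_pos, hb_lt, hb⟩

end Asymptotics

lemma revPerm_apply_ne {m : ℕ} (x : Fin (2 * m)) : Fin.revPerm x ≠ x := by
  rw [Fin.revPerm_apply, Ne, Fin.ext_iff, Fin.val_rev]
  lia

theorem exists_graph_large_girth_small_indepNum {D g : ℕ} (hg : 2 ≤ g) {b : ℝ} (hb : 0 < b)
    (hD : 1 < D * b / 2 + Real.log b) :
    ∃ c : ℕ, ∀ᶠ m : ℕ in Filter.atTop, ∃ G : SimpleGraph (Fin (2 * m)),
      (∀ v, (G.neighborSet v).ncard ≤ D) ∧ (g : ℕ∞) < G.egirth ∧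
        m * D ≤ G.edgeSet.ncard + c * D ∧ (G.indepNum : ℝ) ≤ b * (2 * m) + c := by
  refine ⟨2 * ∑ l ∈ Finset.range g, (4 * D) ^ (l + 1), ?_⟩
  have tendsto_two_mul : Filter.Tendsto (2 * · : ℕ → ℕ) Filter.atTop Filter.atTop :=
    Filter.tendsto_id.const_mul_atTop' two_pos
  filter_upwards [Filter.eventually_ge_atTop (2 * g),
    tendsto_two_mul.eventually (eventually_choose_mul_exp_pow_lt_half hb hD)] with m hm hm_choose
  set s := ⌈b * (2 * m : ℕ)⌉₊
  have ht : Function.Involutive (Fin.revPerm : Equiv.Perm (Fin (2 * m))) := Fin.rev_involutive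
  obtain ⟨r, hshort, hfree⟩ := exists_conjFamily_few_short_cycles (ι := Fin D) (g := g) (s := s)
    ht (by rw [Fintype.card_fin]; lia) (by simpa using hm_choose s (Nat.le_ceil _))
  rw [Fintype.card_fin] at hshort
  have hσ := involutive_conjFamily ht r
  have hfix := conjFamily_apply_ne revPerm_apply_ne r
  refine ⟨prunedGraph (conjFamily Fin.revPerm r) g, fun v => ?_, lt_egirth_prunedGraph hσ hfix,
    ?_, ?_⟩
  · simpa using ncard_neighborSet_prunedGraph_le hσ hfix v
  · have hedges := card_mul_card_le_ncard_edgeSet_prunedGraph hσ hfix hg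
    rw [Fintype.card_fin, Fintype.card_fin] at hedges
    have := Nat.mul_le_mul_right D hshort
    lia
  · have hindep : ((prunedGraph (conjFamily Fin.revPerm r) g).indepNum : ℝ) + 1 ≤
        s + (2 * ∑ l ∈ Finset.range g, (4 * D) ^ (l + 1) : ℕ) := by
      exact_mod_cast (indepNum_prunedGraph_lt hσ hfix hfree).trans_le (Nat.add_le_add_left hshort s)
    have hceil : (s : ℝ) < b * (2 * m : ℕ) + 1 := Nat.ceil_lt_add_one (by positivity)
    rw [Nat.cast_mul 2 m, Nat.cast_two] at hceil
    linarith

/-- Proposition 5: for every `Δ ≥ 3` and `g ≥ 3` there is a graph with maximum degree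
at most `Δ` and girth at least `g` whose injective chromatic index is at least
`Δ(Δ-1)/(4 ln Δ)`. -/
theorem exists_graph_large_injChromIndex (Δ g : ℕ) (hΔ : 3 ≤ Δ) (hg : 3 ≤ g) :
    ∃ (n : ℕ) (G : SimpleGraph (Fin n)),
      (∀ v, (G.neighborSet v).ncard ≤ Δ) ∧
      (g : ℕ∞) ≤ G.egirth ∧
      ((Δ : ℝ) * (Δ - 1)) / (4 * Real.log Δ) ≤ injChromIndex G := by
  have hΔ' : (3 : ℝ) ≤ Δ := by exact_mod_cast hΔ
  have hlog : 0 < Real.log Δ := Real.log_pos (by linarith)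
  obtain ⟨b, hb_pos, hb_lt, hb⟩ := exists_pos_lt_one_lt_mul_add_log hΔ'
  obtain ⟨c, hgraphs⟩ := exists_graph_large_girth_small_indepNum (Nat.le_of_succ_le hg) hb_pos hb
  set K : ℝ := (Δ * (Δ - 1)) / (4 * Real.log Δ) with hK
  have hgap : 0 < Δ - K * (2 * b) := by
    rw [sub_pos, hK, div_mul_eq_mul_div, div_lt_iff₀ (by positivity)]
    rw [lt_div_iff₀ (by linarith)] at hb_lt
    nlinarith
  have hlarge :=
    (tendsto_natCast_atTop_atTop.const_mul_atTop hgap).eventually_gt_atTop (c * Δ + K * c)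
  obtain ⟨m, ⟨G, hdeg, hgirth, hedges, hindep⟩, hm⟩ := (hgraphs.and hlarge).exists
  refine ⟨2 * m, G, hdeg, hgirth.le, le_of_not_gt fun hlt => hm.not_ge ?_⟩
  have : (m * Δ : ℝ) ≤ K * (b * (2 * m) + c) + c * Δ :=
    calc (m * Δ : ℝ) ≤ G.edgeSet.ncard + c * Δ := by exact_mod_cast hedges
      _ ≤ injChromIndex G * G.indepNum + c * Δ := by
        gcongr
        exact_mod_cast ncard_edgeSet_le_injChromIndex_mul_indepNum G
      _ ≤ K * (b * (2 * m) + c) + c * Δ := add_le_add_left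
        (mul_le_mul hlt.le hindep (Nat.cast_nonneg _) ((Nat.cast_nonneg _).trans hlt.le)) _
  linarith
end

section
/- For every integer Δ ≥ 21 and every integer g ≥ 3, there exists a Δ-regular bipartite finite simple graph G with girth at least g and with both parts of the same size n, such that every induced matching in G has fewer than ⌈3 n ln Δ / Δ⌉ edges; consequently, the strong chromatic index satisfies χ'_s(G) > Δ²/(3 ln Δ). -/
open SimpleGraph

/-- Two distinct edges of `G` are at distance at most 1 if they share an endpoint or
some endpoint of one is adjacent to some endpoint of the other. -/
def StrongConflict {V : Type*} (G : SimpleGraph V) (e₁ e₂ : Sym2 V) : Prop :=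
  e₁ ≠ e₂ ∧ ∃ u ∈ e₁, ∃ v ∈ e₂, u = v ∨ G.Adj u v

/-- A strong edge-coloring of `G` with `k` colors: any two distinct edges at distance
at most 1 get distinct colors. -/
def IsStrongEdgeColoring {V : Type*} (G : SimpleGraph V) {k : ℕ} (f : Sym2 V → Fin k) : Prop :=
  ∀ e₁ ∈ G.edgeSet, ∀ e₂ ∈ G.edgeSet, StrongConflict G e₁ e₂ → f e₁ ≠ f e₂

/-- The strong chromatic index of `G`. -/
noncomputable def sChromIndex {V : Type*} (G : SimpleGraph V) : ℕ :=
  sInf {k : ℕ | ∃ f : Sym2 V → Fin k, IsStrongEdgeColoring G f}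

/-- An induced matching of `G`: a set of edges of `G`, any two distinct members of
which are at distance at least 2. -/
def IsInducedMatching {V : Type*} (G : SimpleGraph V) (M : Set (Sym2 V)) : Prop :=
  M ⊆ G.edgeSet ∧ ∀ e₁ ∈ M, ∀ e₂ ∈ M, ¬ StrongConflict G e₁ e₂

/-!
Take `Δ` random permutations of `n` points, read as a `Δ`-regular bipartite multigraph. A union
bound shows that, with probability more than `1 / 2`, no induced matching avoiding parallel edges
has more than `(3 log Δ - 1 / 2) n / Δ` edges; by Markov's inequality, with probability more than
`1 / 2`, fewer than `n / (2 Δ)` left vertices lie on a cycle shorter than `g`. Deleting these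
vertices would destroy regularity, so short cycles are removed by lifting instead.

Lift the multigraph with one `ℤ/2`-coordinate for each edge at a bad left vertex, flipped by that
edge only. A closed walk lifts to a closed walk only if it uses each of these edges an even number
of times. A shortest cycle of the graph that is shorter than `g` uses one of them exactly once, so
each lift raises the girth until it reaches `g`. The good left vertices keep their voltage-free
copies, hence the bounds on induced matchings and on bad vertices scale with the number of points.
An induced matching has at most `(3 log Δ - 1 / 2) n / Δ` edges at good vertices and fewer than
`n / (2 Δ)` at bad ones. As colour classes of a strong edge-colouring are induced matchings, the
bound on the strong chromatic index follows from counting the `n Δ` edges.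
-/

section Girth

variable {V W : Type*} {G : SimpleGraph V} {H : SimpleGraph W}

theorem exists_isCycle_edges_subset_of_isChain {u : V} {w : G.Walk u u} (hnil : ¬ w.Nil)
    (hw : w.edges.IsChain (· ≠ ·)) :
    ∃ (x : V) (c : G.Walk x x), c.IsCycle ∧ c.edges ⊆ w.edges := by
  by_contra! hcon
  let K : SimpleGraph V := fromEdgeSet {e | e ∈ w.edges}
  have mem_K {e : Sym2 V} : e ∈ K.edgeSet ↔ e ∈ w.edges := by
    rw [edgeSet_fromEdgeSet]
    exact ⟨And.left, fun he ↦ ⟨he, G.not_isDiag_of_mem_edgeSet (w.edges_subset_edgeSet he)⟩⟩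
  have hKG : ∀ e ∈ K.edgeSet, e ∈ G.edgeSet := fun e he ↦ w.edges_subset_edgeSet (mem_K.1 he)
  have hacyclic : K.IsAcyclic := fun x c hc ↦
    hcon x (c.transfer G fun e he ↦ hKG e (c.edges_subset_edgeSet he)) (hc.transfer _) fun e he ↦
      mem_K.1 (c.edges_subset_edgeSet (by rwa [Walk.edges_transfer] at he))
  have hpath : (w.transfer K fun _ ↦ mem_K.2).IsPath := by
    rwa [hacyclic.isPath_iff_isChain, Walk.edges_transfer]
  rw [Walk.isPath_iff_nil, ← Walk.length_eq_zero_iff, Walk.length_transfer,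
    Walk.length_eq_zero_iff] at hpath
  exact hnil hpath

theorem isChain_ne_edges_map {φ : H →g G} (hφ : ∀ u, Set.InjOn φ (H.neighborSet u)) {u v : W}
    {w : H.Walk u v} (hw : w.IsTrail) : (w.map φ).edges.IsChain (· ≠ ·) := by
  replace hw := hw.edges_nodup
  induction w with
  | nil => simp
  | @cons u v _ huv p ih =>
    cases p with
    | nil => simp
    | @cons _ x _ hvx q =>
      simp only [Walk.edges_cons, List.nodup_cons, Walk.map_cons, List.isChain_cons_cons] at hw ih ⊢
      refine ⟨fun heq ↦ ?_, ih hw.2⟩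
      have hux : u = x := hφ v huv.symm hvx (Sym2.congr_right.1 (Sym2.eq_swap.trans heq))
      subst hux
      exact hw.1 (by simp [Sym2.eq_swap])

theorem exists_isCycle_edges_subset_map {φ : H →g G} (hφ : ∀ u, Set.InjOn φ (H.neighborSet u))
    {u : W} {w : H.Walk u u} (hw : w.IsCycle) :
    ∃ (x : V) (c : G.Walk x x), c.IsCycle ∧ c.edges ⊆ (w.map φ).edges := by
  refine exists_isCycle_edges_subset_of_isChain ?_ (isChain_ne_edges_map hφ hw.isTrail)
  rw [← Walk.length_eq_zero_iff, Walk.length_map, Walk.length_eq_zero_iff]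
  exact hw.not_nil

theorem length_le_length_of_edges_subset {u v x y : V} {p : G.Walk x y} (hp : p.IsTrail)
    {w : G.Walk u v} (h : p.edges ⊆ w.edges) : p.length ≤ w.length := by
  simpa using (List.subperm_of_subset hp.edges_nodup h).length_le

theorem egirth_le_egirth_of_injOn_neighborSet (φ : H →g G)
    (hφ : ∀ u, Set.InjOn φ (H.neighborSet u)) : G.egirth ≤ H.egirth := by
  refine le_egirth.2 fun u w hw ↦ ?_
  obtain ⟨x, c, hc, hcw⟩ := exists_isCycle_edges_subset_map hφ hw
  have hlen : c.length ≤ w.length := by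
    simpa using length_le_length_of_edges_subset hc.isTrail hcw
  exact (egirth_le_length hc).trans (by exact_mod_cast hlen)

theorem card_toFinset_support_of_isCycle [DecidableEq V] {u : V} {w : G.Walk u u}
    (hw : w.IsCycle) : w.support.toFinset.card = w.length := by
  have htail : w.support.toFinset = w.support.tail.toFinset := by
    rw [← w.cons_tail_support, List.toFinset_cons, List.tail_cons,
      Finset.insert_eq_of_mem (List.mem_toFinset.2 (Walk.end_mem_tail_support hw.not_nil))]
  rw [htail, List.toFinset_card_of_nodup hw.support_nodup, List.length_tail, Walk.length_support,
    Nat.add_sub_cancel]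

end Girth

section StrongColoring

variable {V : Type*} {G : SimpleGraph V}

theorem IsStrongEdgeColoring.isInducedMatching {k : ℕ} {f : Sym2 V → Fin k}
    (hf : IsStrongEdgeColoring G f) (c : Fin k) : IsInducedMatching G {e ∈ G.edgeSet | f e = c} :=
  ⟨fun _ he ↦ he.1, fun e₁ h₁ e₂ h₂ h ↦ hf e₁ h₁.1 e₂ h₂.1 h (h₁.2.trans h₂.2.symm)⟩

theorem exists_isStrongEdgeColoring_sChromIndex [Finite V] (G : SimpleGraph V) :
    ∃ f : Sym2 V → Fin (sChromIndex G), IsStrongEdgeColoring G f :=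
  Nat.sInf_mem (s := {k | ∃ f : Sym2 V → Fin k, IsStrongEdgeColoring G f})
    ⟨_, Finite.equivFin _, fun _ _ _ _ h heq ↦ h.1 ((Finite.equivFin _).injective heq)⟩

theorem ncard_edgeSet_lt_sChromIndex_mul [Finite V] [Nonempty V] {t : ℝ}
    (ht : ∀ M, IsInducedMatching G M → (M.ncard : ℝ) < t) :
    (G.edgeSet.ncard : ℝ) < sChromIndex G * t := by
  obtain ⟨f, hf⟩ := exists_isStrongEdgeColoring_sChromIndex G
  have hcover : G.edgeSet = ⋃ c, {e ∈ G.edgeSet | f e = c} := by ext; simp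
  have : Nonempty (Fin (sChromIndex G)) := ‹Nonempty V›.map fun v ↦ f s(v, v)
  calc (G.edgeSet.ncard : ℝ)
      ≤ ∑ c, ({e ∈ G.edgeSet | f e = c}.ncard : ℝ) := by
        conv_lhs => rw [hcover]
        exact_mod_cast Set.ncard_iUnion_le_of_fintype _
    _ < ∑ _c : Fin (sChromIndex G), t :=
        Finset.sum_lt_sum_of_nonempty Finset.univ_nonempty fun c _ ↦
          ht _ (hf.isInducedMatching c)
    _ = sChromIndex G * t := by simp

end StrongColoring

section Numerics

theorem choose_le_exp_one_mul_div_pow (n k : ℕ) :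
    (n.choose k : ℝ) ≤ (Real.exp 1 * n / k) ^ k := by
  have hk : (0 : ℝ) < (k : ℝ) ^ k := by exact_mod_cast Nat.pow_self_pos
  calc (n.choose k : ℝ) ≤ (n : ℝ) ^ k / k.factorial := Nat.choose_le_pow_div k n
    _ = n ^ k / k ^ k * (k ^ k / k.factorial) := by
        field_simp
    _ ≤ n ^ k / k ^ k * Real.exp k := by
        gcongr
        exact Real.pow_div_factorial_le_exp _ k.cast_nonneg k
    _ = (Real.exp 1 * n / k) ^ k := by
        rw [div_pow, mul_pow, ← Real.exp_nat_mul, mul_one]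
        ring

theorem exp_one_pow_three : Real.exp 1 ^ 3 = Real.exp 3 := by
  rw [← Real.exp_nat_mul, Nat.cast_ofNat, mul_one]

theorem eighteen_lt_exp_three : 18 < Real.exp 3 := by
  rw [← exp_one_pow_three]
  exact lt_trans (by norm_num) (pow_lt_pow_left₀ Real.exp_one_gt_d9 (by norm_num) three_ne_zero)

theorem exp_three_lt : Real.exp 3 < 21 := by
  rw [← exp_one_pow_three]
  exact (pow_lt_pow_left₀ Real.exp_one_lt_d9 (by positivity) three_ne_zero).trans (by norm_num)

variable {x : ℝ}

theorem three_le_log (hx : 21 ≤ x) : 3 ≤ Real.log x :=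
  (Real.le_log_iff_exp_le (by linarith)).2 (exp_three_lt.le.trans hx)

theorem three_mul_log_sub_half_le_half (hx : 21 ≤ x) : 3 * Real.log x - 1 / 2 ≤ x / 2 := by
  have htangent : Real.log (x / Real.exp 3) ≤ x / Real.exp 3 - 1 :=
    Real.log_le_sub_one_of_pos (by positivity)
  rw [Real.log_div (by positivity) (by positivity), Real.log_exp] at htangent
  have hdiv : x / Real.exp 3 ≤ x / 18 := by
    gcongr
    exact eighteen_lt_exp_three.le
  linarith

/-- The proportion of left vertices that, with probability more than `1 / 2`, no induced matching of
`d` random permutations exceeds. It falls short of `3 log d / d` by `1 / (2 d)`, the room left for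
the left vertices on short cycles. -/
noncomputable def matchingRate (d : ℕ) : ℝ := (3 * Real.log d - 1 / 2) / d

theorem matchingRate_add (d : ℕ) : matchingRate d + 1 / (2 * d) = 3 * Real.log d / d := by
  rw [matchingRate]
  ring

variable {d : ℕ}

theorem matchingRate_mul_self (hd : d ≠ 0) : matchingRate d * d = 3 * Real.log d - 1 / 2 :=
  div_mul_cancel₀ _ (Nat.cast_ne_zero.2 hd)

theorem matchingRate_pos (hd : 21 ≤ d) : 0 < matchingRate d := by
  have hd' : (21 : ℝ) ≤ d := by exact_mod_cast hd
  exact div_pos (by linarith [three_le_log hd']) (by linarith)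

theorem matchingRate_le_half (hd : 21 ≤ d) : matchingRate d ≤ 1 / 2 := by
  have hd' : (21 : ℝ) ≤ d := by exact_mod_cast hd
  rw [matchingRate, div_le_iff₀ (by linarith)]
  linarith [three_mul_log_sub_half_le_half hd']

theorem sq_exp_one_div_matchingRate_mul_pow_lt_half (hd : 21 ≤ d) :
    (Real.exp 1 / matchingRate d) ^ 2 * d * (1 - matchingRate d) ^ (d - 1) < 1 / 2 := by
  have hd' : (21 : ℝ) ≤ d := by exact_mod_cast hd
  have hy := matchingRate_mul_self (d := d) (by lia)
  have hy0 := matchingRate_pos hd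
  have hy_half := matchingRate_le_half hd
  set y := matchingRate d
  have hyd : 17 / 2 ≤ y * d := by linarith [three_le_log hd']
  have hpow : (1 - y) ^ (d - 1) ≤ Real.exp 1 / (d : ℝ) ^ 3 := by
    calc (1 - y) ^ (d - 1) ≤ Real.exp (-y) ^ (d - 1) :=
          pow_le_pow_left₀ (by linarith) (Real.one_sub_le_exp_neg y) _
      _ = Real.exp (y + 1 / 2 - 3 * Real.log d) := by
          rw [← Real.exp_nat_mul, Nat.cast_sub (by lia), Nat.cast_one]
          congr 1
          linarith
      _ = Real.exp (y + 1 / 2) / (d : ℝ) ^ 3 := by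
          rw [Real.exp_sub, ← Nat.cast_ofNat (n := 3), Real.exp_nat_mul,
            Real.exp_log (by linarith)]
      _ ≤ Real.exp 1 / (d : ℝ) ^ 3 := by
          gcongr
          linarith
  calc (Real.exp 1 / y) ^ 2 * d * (1 - y) ^ (d - 1)
      ≤ (Real.exp 1 / y) ^ 2 * d * (Real.exp 1 / (d : ℝ) ^ 3) := by gcongr
    _ = Real.exp 3 / (y * d) ^ 2 := by
        rw [← exp_one_pow_three]
        field_simp
    _ < 21 / (17 / 2) ^ 2 := by
        gcongr
        exact exp_three_lt
    _ ≤ 1 / 2 := by norm_num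

end Numerics

/-- A family of permutations of `α` indexed by a set `ι` of labels. It encodes the bipartite
multigraph on `α ⊕ α` in which every left vertex `a` is joined, for every label `i`, to the right
vertex `σ i a`; all its vertices have degree `|ι|`. -/
abbrev PermFamily (ι α : Type*) := ι → Equiv.Perm α

namespace PermFamily

open Equiv
open scoped Finset

section Graph

variable {ι α β : Type*} {σ : PermFamily ι α} {τ : PermFamily ι β} {π : β → α} {S : Set α}
  {T : Set β}

/-- The edge with label `i` at the left vertex `a` of the multigraph of `σ`. -/
def edge (σ : PermFamily ι α) (i : ι) (a : α) : Sym2 (α ⊕ α) := s(.inl a, .inr (σ i a))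

/-- The simple graph underlying the multigraph of `σ` after all edges at left vertices outside `S`
have been deleted; the vertices themselves are kept. -/
def graphOn (σ : PermFamily ι α) (S : Set α) : SimpleGraph (α ⊕ α) :=
  fromEdgeSet {e | ∃ a ∈ S, ∃ i, σ.edge i a = e}

/-- The multigraph of `σ` has no parallel edges at the left vertices in `S`. -/
def SimpleOn (σ : PermFamily ι α) (S : Set α) : Prop :=
  ∀ a ∈ S, Function.Injective fun i ↦ σ i a

theorem edge_eq_edge_iff {i j : ι} {a b : α} :
    σ.edge i a = σ.edge j b ↔ a = b ∧ σ i a = σ j b := by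
  simp [edge]

theorem SimpleOn.edge_eq_edge_iff (hσ : σ.SimpleOn S) {i j : ι} {a b : α} (ha : a ∈ S) :
    σ.edge i a = σ.edge j b ↔ a = b ∧ i = j := by
  rw [PermFamily.edge_eq_edge_iff]
  constructor
  · rintro ⟨rfl, h⟩
    exact ⟨rfl, hσ a ha h⟩
  · rintro ⟨rfl, rfl⟩
    exact ⟨rfl, rfl⟩

theorem mem_edgeSet_graphOn {e : Sym2 (α ⊕ α)} :
    e ∈ (σ.graphOn S).edgeSet ↔ ∃ a ∈ S, ∃ i, σ.edge i a = e := by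
  rw [graphOn, edgeSet_fromEdgeSet]
  refine ⟨And.left, fun h ↦ ⟨h, ?_⟩⟩
  obtain ⟨a, -, i, rfl⟩ := h
  simp [edge]

theorem graphOn_adj_iff {u v : α ⊕ α} :
    (σ.graphOn S).Adj u v ↔
      ∃ a ∈ S, ∃ i, (u = .inl a ∧ v = .inr (σ i a)) ∨ (u = .inr (σ i a) ∧ v = .inl a) := by
  rw [← mem_edgeSet, mem_edgeSet_graphOn]
  refine exists_congr fun a ↦ and_congr_right fun _ ↦ exists_congr fun i ↦ ?_
  rw [edge, eq_comm, Sym2.eq_iff]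

theorem graphOn_adj_inl_inr {a b : α} :
    (σ.graphOn S).Adj (.inl a) (.inr b) ↔ a ∈ S ∧ ∃ i, σ i a = b := by
  simp [graphOn_adj_iff, eq_comm]

theorem not_graphOn_adj_inl_inl (a b : α) : ¬ (σ.graphOn S).Adj (.inl a) (.inl b) := by
  simp [graphOn_adj_iff]

theorem not_graphOn_adj_inr_inr (a b : α) : ¬ (σ.graphOn S).Adj (.inr a) (.inr b) := by
  simp [graphOn_adj_iff]

theorem ncard_neighborSet_graphOn_univ (hσ : σ.SimpleOn Set.univ) (v : α ⊕ α) :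
    ((σ.graphOn Set.univ).neighborSet v).ncard = Nat.card ι := by
  rcases v with a | b
  · have hrange : (σ.graphOn Set.univ).neighborSet (.inl a) =
        Set.range fun i ↦ Sum.inr (σ i a) := by
      ext (b | b) <;> simp [graphOn_adj_iff, eq_comm]
    rw [hrange]
    exact Set.ncard_range_of_injective (Sum.inr_injective.comp (hσ a trivial))
  · have hrange : (σ.graphOn Set.univ).neighborSet (.inr b) =
        Set.range fun i ↦ Sum.inl ((σ i).symm b) := by
      ext (a | a) <;> simp [graphOn_adj_iff, Equiv.symm_apply_eq]
    rw [hrange, Set.ncard_range_of_injective]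
    intro i j hij
    have hsymm : (σ i).symm b = (σ j).symm b := Sum.inl_injective hij
    refine hσ ((σ i).symm b) trivial (?_ : σ i _ = σ j _)
    rw [Equiv.apply_symm_apply, hsymm, Equiv.apply_symm_apply]

theorem ncard_edgeSet_graphOn_univ (hσ : σ.SimpleOn Set.univ) :
    (σ.graphOn Set.univ).edgeSet.ncard = Nat.card α * Nat.card ι := by
  have hrange : (σ.graphOn Set.univ).edgeSet = Set.range fun p : α × ι ↦ σ.edge p.2 p.1 := by
    ext e
    simp [mem_edgeSet_graphOn]
  rw [hrange, Set.ncard_range_of_injective, Nat.card_prod]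
  rintro ⟨a, i⟩ ⟨b, j⟩ h
  exact Prod.ext_iff.2 ((hσ.edge_eq_edge_iff trivial).1 h)

theorem SimpleOn.of_mapsTo (hσ : σ.SimpleOn S) (hπ : ∀ i, Function.Semiconj π (τ i) (σ i))
    (hTS : Set.MapsTo π T S) : τ.SimpleOn T := fun b hb i j hij ↦
  hσ (π b) (hTS hb) (by simpa only [(hπ _).eq] using congrArg π hij)

/-- The homomorphism between the graphs of two families that are semiconjugate through `π`. -/
def mapHom (hπ : ∀ i, Function.Semiconj π (τ i) (σ i)) (hTS : Set.MapsTo π T S) :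
    τ.graphOn T →g σ.graphOn S where
  toFun := Sum.map π π
  map_rel' {u v} h := by
    obtain ⟨b, hb, i, ⟨rfl, rfl⟩ | ⟨rfl, rfl⟩⟩ := graphOn_adj_iff.1 h
    · exact graphOn_adj_iff.2 ⟨π b, hTS hb, i, .inl ⟨rfl, congrArg Sum.inr (hπ i b)⟩⟩
    · exact graphOn_adj_iff.2 ⟨π b, hTS hb, i, .inr ⟨congrArg Sum.inr (hπ i b), rfl⟩⟩

theorem SimpleOn.injOn_mapHom (hσ : σ.SimpleOn S) (hπ : ∀ i, Function.Semiconj π (τ i) (σ i))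
    (hTS : Set.MapsTo π T S) (u : β ⊕ β) :
    Set.InjOn (mapHom hπ hTS) ((τ.graphOn T).neighborSet u) := by
  intro v hv w hw heq
  obtain ⟨b, hb, i, ⟨rfl, rfl⟩ | ⟨rfl, rfl⟩⟩ := graphOn_adj_iff.1 hv <;>
  obtain ⟨b', -, j, ⟨hu, rfl⟩ | ⟨hu, rfl⟩⟩ := graphOn_adj_iff.1 hw <;>
  simp only [Sum.inl.injEq, Sum.inr.injEq, reduceCtorEq] at hu
  · subst hu
    have hij : σ i (π b) = σ j (π b) := by
      simpa only [(hπ _).eq] using Sum.inr_injective heq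
    rw [hσ (π b) (hTS hb) hij]
  · have hbb' : π b = π b' := Sum.inl_injective heq
    have hij : σ i (π b) = σ j (π b) := by
      simpa only [(hπ _).eq, ← hbb'] using congrArg π hu
    obtain rfl := hσ (π b) (hTS hb) hij
    rw [(τ i).injective hu]

theorem SimpleOn.egirth_le_of_mapsTo (hσ : σ.SimpleOn S)
    (hπ : ∀ i, Function.Semiconj π (τ i) (σ i)) (hTS : Set.MapsTo π T S) :
    (σ.graphOn S).egirth ≤ (τ.graphOn T).egirth :=
  egirth_le_egirth_of_injOn_neighborSet (mapHom hπ hTS) (hσ.injOn_mapHom hπ hTS)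

end Graph

section InducedSelection

variable {ι α : Type*} {σ : PermFamily ι α} {S : Set α}

/-- The edges `{a, σ (f a) a}`, for `a ∈ X`, form an induced matching: the right endpoint of none
of them is adjacent to the left endpoint of another. -/
def IsInducedSelection (σ : PermFamily ι α) (X : Finset α) (f : α → ι) : Prop :=
  ∀ a ∈ X, ∀ b ∈ X, ∀ i, σ i a = σ (f b) b → a = b

/-- Every induced matching of the multigraph of `σ` with left endpoints in `S` has at most `t`
edges. -/
def InducedMatchingBoundOn (σ : PermFamily ι α) (S : Set α) (t : ℝ) : Prop :=
  ∀ (X : Finset α) (f : α → ι), ↑X ⊆ S → σ.IsInducedSelection X f → (#X : ℝ) ≤ t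

theorem IsInducedSelection.mono {X Y : Finset α} {f : α → ι} (hY : σ.IsInducedSelection Y f)
    (hXY : X ⊆ Y) : σ.IsInducedSelection X f :=
  fun a ha b hb ↦ hY a (hXY ha) b (hXY hb)

theorem exists_isInducedSelection [Finite α] [Nonempty ι] {M : Set (Sym2 (α ⊕ α))}
    (hM : IsInducedMatching (σ.graphOn Set.univ) M) :
    ∃ (X : Finset α) (f : α → ι), σ.IsInducedSelection X f ∧ M.ncard ≤ #X := by
  classical
  have := Fintype.ofFinite α
  let X : Finset α := {a | ∃ i, σ.edge i a ∈ M}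
  have hX : ∀ a ∈ X, ∃ i, σ.edge i a ∈ M := fun a ha ↦ by simpa [X] using ha
  choose! f hf using hX
  refine ⟨X, f, fun a ha b hb i hab ↦ ?_, ?_⟩
  · by_contra hne
    refine hM.2 _ (hf a ha) _ (hf b hb) ⟨fun h ↦ hne (edge_eq_edge_iff.1 h).1, .inl a,
      Sym2.mem_mk_left _ _, .inr (σ (f b) b), Sym2.mem_mk_right _ _, .inr ?_⟩
    exact graphOn_adj_inl_inr.2 ⟨trivial, i, hab⟩
  · have hsub : M ⊆ X.image fun a ↦ σ.edge (f a) a := by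
      intro e he
      obtain ⟨a, -, i, rfl⟩ := mem_edgeSet_graphOn.1 (hM.1 he)
      have ha : a ∈ X := by simpa [X] using ⟨i, he⟩
      rw [Finset.coe_image]
      refine ⟨a, ha, ?_⟩
      by_contra hne
      exact hM.2 _ (hf a ha) _ he
        ⟨hne, .inl a, Sym2.mem_mk_left _ _, .inl a, Sym2.mem_mk_left _ _, .inl rfl⟩
    calc M.ncard ≤ #(X.image fun a ↦ σ.edge (f a) a) := by
          rw [← Set.ncard_coe_finset]
          exact Set.ncard_le_ncard hsub (Finset.finite_toSet _)
      _ ≤ #X := Finset.card_image_le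

theorem InducedMatchingBoundOn.ncard_le [Finite α] [Nonempty ι] {t : ℝ}
    (hσ : σ.InducedMatchingBoundOn S t) {M : Set (Sym2 (α ⊕ α))}
    (hM : IsInducedMatching (σ.graphOn Set.univ) M) : (M.ncard : ℝ) ≤ t + Sᶜ.ncard := by
  classical
  obtain ⟨X, f, hX, hMX⟩ := exists_isInducedSelection hM
  have hin : (#{a ∈ X | a ∈ S} : ℝ) ≤ t :=
    hσ _ f (fun a ha ↦ (Finset.mem_filter.1 ha).2) (hX.mono (Finset.filter_subset _ _))
  have hout : #{a ∈ X | a ∉ S} ≤ Sᶜ.ncard := by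
    rw [← Set.ncard_coe_finset]
    exact Set.ncard_le_ncard (fun a ha ↦ (Finset.mem_filter.1 ha).2) (Set.toFinite _)
  calc (M.ncard : ℝ) ≤ #X := by exact_mod_cast hMX
    _ = #{a ∈ X | a ∈ S} + #{a ∈ X | a ∉ S} := by
        exact_mod_cast (Finset.card_filter_add_card_filter_not (s := X) (· ∈ S)).symm
    _ ≤ t + Sᶜ.ncard := by gcongr

theorem InducedMatchingBoundOn.preimage {β : Type*} {τ : PermFamily ι β} {t : ℝ}
    (hσ : σ.InducedMatchingBoundOn S t) (e : β ≃ α)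
    (he : ∀ i, Function.Semiconj e (τ i) (σ i)) : τ.InducedMatchingBoundOn (e ⁻¹' S) t := by
  intro X f hXS hX
  have hcard := hσ (X.map e.toEmbedding) (f ∘ e.symm) ?_ ?_
  · rwa [Finset.card_map] at hcard
  · intro a ha
    obtain ⟨b, hb, rfl⟩ := Finset.mem_map.1 ha
    exact hXS hb
  · simp only [IsInducedSelection, Finset.forall_mem_map, Equiv.coe_toEmbedding,
      Function.comp_apply, Equiv.symm_apply_apply, ← (he _).eq, e.apply_eq_iff_eq]
    exact hX

theorem card_div_lt_sChromIndex [Finite α] [Nonempty α] (hσ : σ.SimpleOn Set.univ) {t : ℝ}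
    (ht : ∀ M, IsInducedMatching (σ.graphOn Set.univ) M → (M.ncard : ℝ) < t * Nat.card α) :
    (Nat.card ι : ℝ) / t < sChromIndex (σ.graphOn Set.univ) := by
  have hα : (0 : ℝ) < Nat.card α := Nat.cast_pos.2 Nat.card_pos
  have ht0 : 0 < t := by
    have hempty := ht ∅ ⟨Set.empty_subset _, by simp⟩
    rw [Set.ncard_empty, Nat.cast_zero] at hempty
    exact pos_of_mul_pos_left hempty hα.le
  rw [div_lt_iff₀ ht0]
  refine lt_of_mul_lt_mul_left ?_ hα.le
  calc (Nat.card α * Nat.card ι : ℝ) = (σ.graphOn Set.univ).edgeSet.ncard := by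
        rw [ncard_edgeSet_graphOn_univ hσ, Nat.cast_mul]
    _ < sChromIndex (σ.graphOn Set.univ) * (t * Nat.card α) :=
        ncard_edgeSet_lt_sChromIndex_mul ht
    _ = Nat.card α * (sChromIndex (σ.graphOn Set.univ) * t) := by ring

end InducedSelection

section VoltageLift

variable {ι α Γ : Type*} [AddGroup Γ] {σ : PermFamily ι α} {S : Set α}

/-- The lift of `σ` along a voltage assignment `v`: the edge labelled `i` at `a` is replaced by the
edges from `(a, γ)` to `(σ i a, γ + v i a)`, for all `γ`. -/
def voltageLift (σ : PermFamily ι α) (v : ι → α → Γ) : PermFamily ι (α × Γ) :=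
  fun i ↦ (σ i).prodShear fun a ↦ Equiv.addRight (v i a)

theorem semiconj_fst_voltageLift (σ : PermFamily ι α) (v : ι → α → Γ) (i : ι) :
    Function.Semiconj Prod.fst (σ.voltageLift v i) (σ i) :=
  fun _ ↦ rfl

theorem voltageLift_apply (σ : PermFamily ι α) (v : ι → α → Γ) (i : ι) (a : α) (γ : Γ) :
    σ.voltageLift v i (a, γ) = (σ i a, γ + v i a) :=
  rfl

theorem InducedMatchingBoundOn.voltageLift [Finite Γ] {v : ι → α → Γ} {t : ℝ}
    (hσ : σ.InducedMatchingBoundOn S t) (hv : ∀ a ∈ S, ∀ i, v i a = 0) :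
    (σ.voltageLift v).InducedMatchingBoundOn (Prod.fst ⁻¹' S) (t * Nat.card Γ) := by
  classical
  have := Fintype.ofFinite Γ
  intro X f hXS hX
  have hfiber (γ : Γ) : (#{p ∈ X | p.2 = γ} : ℝ) ≤ t := by
    have hinj : Set.InjOn Prod.fst (↑{p ∈ X | p.2 = γ} : Set (α × Γ)) := by
      rintro ⟨a, _⟩ ha ⟨b, _⟩ hb rfl
      rw [Finset.mem_coe, Finset.mem_filter] at ha hb
      exact Prod.ext rfl (ha.2.trans hb.2.symm)
    have hmem {a : α} (ha : a ∈ Finset.image Prod.fst {p ∈ X | p.2 = γ}) : (a, γ) ∈ X := by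
      simpa using ha
    rw [← Finset.card_image_of_injOn hinj]
    refine hσ _ (fun a ↦ f (a, γ)) (fun a ha ↦ hXS (hmem ha)) fun a ha b hb i hab ↦ ?_
    refine congrArg Prod.fst (hX (a, γ) (hmem ha) (b, γ) (hmem hb) i ?_)
    rw [voltageLift_apply, voltageLift_apply, hab, hv a (hXS (hmem ha)), hv b (hXS (hmem hb))]
  calc (#X : ℝ) = ∑ γ, (#{p ∈ X | p.2 = γ} : ℝ) := by
        exact_mod_cast Finset.card_eq_sum_card_fiberwise fun _ _ ↦
          Finset.mem_coe.2 (Finset.mem_univ _)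
    _ ≤ ∑ _γ : Γ, t := Finset.sum_le_sum fun γ _ ↦ hfiber γ
    _ = t * Nat.card Γ := by simp [mul_comm]

end VoltageLift

section ParityLift

variable {ι α : Type*} {σ : PermFamily ι α} {S : Set α}

open scoped Classical in
/-- The voltage assignment with one coordinate in `ℤ/2` for each labelled edge: an edge at a left
vertex outside `S` flips its own coordinate, and all other edges have voltage `0`. -/
noncomputable def parityVoltage (S : Set α) (i : ι) (a : α) : ι × α → ZMod 2 :=
  if a ∈ S then 0 else Pi.single (i, a) 1

/-- The lift of `σ` in which a walk records the parity of its number of passages through each edge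
at a left vertex outside `S`. -/
noncomputable abbrev parityLift (σ : PermFamily ι α) (S : Set α) :
    PermFamily ι (α × (ι × α → ZMod 2)) :=
  σ.voltageLift (parityVoltage S)

open scoped Classical in
theorem parityVoltage_apply {i j : ι} {a b : α} (ha : a ∉ S) :
    parityVoltage S j b (i, a) = if b = a ∧ j = i then 1 else 0 := by
  by_cases hb : b ∈ S
  · have hba : b ≠ a := by rintro rfl; exact ha hb
    simp [parityVoltage, hb, hba]
  · simp [parityVoltage, hb, Pi.single_apply, eq_comm, and_comm]

theorem SimpleOn.parityLift (hσ : σ.SimpleOn S) : (σ.parityLift S).SimpleOn Set.univ := by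
  rintro ⟨a, γ⟩ - i j hij
  simp only [voltageLift_apply, Prod.mk.injEq, add_right_inj] at hij
  by_cases ha : a ∈ S
  · exact hσ a ha hij.1
  · by_contra hne
    simpa [parityVoltage_apply ha, Ne.symm hne] using congrFun hij.2 (i, a)

/-- The projection of the parity lift onto its base. -/
noncomputable def parityProj (σ : PermFamily ι α) (S : Set α) :
    (σ.parityLift S).graphOn Set.univ →g σ.graphOn Set.univ :=
  mapHom (semiconj_fst_voltageLift σ (parityVoltage S)) (Set.mapsTo_univ _ _)

/-- The `ℤ/2`-coordinates of a vertex of the parity lift. -/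
def level : (α × (ι × α → ZMod 2)) ⊕ (α × (ι × α → ZMod 2)) → ι × α → ZMod 2 :=
  Sum.elim Prod.snd Prod.snd

open scoped Classical in
theorem level_add_level_of_adj (hσ : σ.SimpleOn Set.univ) {i : ι} {a : α} (ha : a ∉ S)
    {x y : (α × (ι × α → ZMod 2)) ⊕ (α × (ι × α → ZMod 2))}
    (hxy : ((σ.parityLift S).graphOn Set.univ).Adj x y) :
    level x (i, a) + level y (i, a) =
      if s(parityProj σ S x, parityProj σ S y) = σ.edge i a then 1 else 0 := by
  wlog hleft : x.isLeft
  · rw [add_comm, Sym2.eq_swap]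
    refine this hσ ha hxy.symm ?_
    obtain ⟨b, -, j, ⟨rfl, rfl⟩ | ⟨rfl, rfl⟩⟩ := graphOn_adj_iff.1 hxy <;> simp_all
  obtain ⟨⟨b, γ⟩, -, j, ⟨rfl, rfl⟩ | ⟨rfl, rfl⟩⟩ := graphOn_adj_iff.1 hxy
  · change γ (i, a) + (γ (i, a) + parityVoltage S j b (i, a)) =
      if σ.edge j b = σ.edge i a then 1 else 0
    rw [CharTwo.add_cancel_left, parityVoltage_apply ha]
    simp only [hσ.edge_eq_edge_iff trivial]
  · simp at hleft

open scoped Classical in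
theorem level_add_level_eq_count (hσ : σ.SimpleOn Set.univ) {i : ι} {a : α} (ha : a ∉ S)
    {x y : (α × (ι × α → ZMod 2)) ⊕ (α × (ι × α → ZMod 2))}
    (w : ((σ.parityLift S).graphOn Set.univ).Walk x y) :
    level x (i, a) + level y (i, a) =
      ((w.map (parityProj σ S)).edges.count (σ.edge i a) : ℕ) := by
  induction w with
  | nil => simp [CharTwo.add_self_eq_zero]
  | @cons x y z hxy p ih =>
    rw [Walk.map_cons, Walk.edges_cons, List.count_cons, Nat.cast_add, ← ih]
    simp only [beq_iff_eq, Nat.cast_ite, Nat.cast_one, Nat.cast_zero]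
    rw [← level_add_level_of_adj hσ ha hxy]
    linear_combination - CharTwo.add_self_eq_zero (level y (i, a))

open scoped Classical in
theorem even_count_edges_map_parityProj (hσ : σ.SimpleOn Set.univ) {i : ι} {a : α} (ha : a ∉ S)
    {x : (α × (ι × α → ZMod 2)) ⊕ (α × (ι × α → ZMod 2))}
    (w : ((σ.parityLift S).graphOn Set.univ).Walk x x) :
    Even ((w.map (parityProj σ S)).edges.count (σ.edge i a)) := by
  rw [← ZMod.natCast_eq_zero_iff_even, ← level_add_level_eq_count hσ ha w,
    CharTwo.add_self_eq_zero]

theorem succ_le_egirth_parityLift {g j : ℕ} (hσ : σ.SimpleOn Set.univ)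
    (hS : (g : ℕ∞) ≤ (σ.graphOn S).egirth) (hj : (j : ℕ∞) ≤ (σ.graphOn Set.univ).egirth)
    (hjg : j < g) : ((j + 1 : ℕ) : ℕ∞) ≤ ((σ.parityLift S).graphOn Set.univ).egirth := by
  classical
  refine le_egirth.2 fun x w hw ↦ ?_
  by_contra! hlt
  have hwj : w.length ≤ j := by
    rw [Nat.cast_lt] at hlt
    lia
  obtain ⟨y, c, hc, hcw⟩ := exists_isCycle_edges_subset_map
    (hσ.injOn_mapHom (semiconj_fst_voltageLift σ (parityVoltage S)) (Set.mapsTo_univ _ _)) hw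
  have hjc : j ≤ c.length := by exact_mod_cast hj.trans (egirth_le_length hc)
  have hperm : c.edges.Perm (w.map (parityProj σ S)).edges :=
    (List.subperm_of_subset hc.edges_nodup hcw).perm_of_length_le (by simpa using hwj.trans hjc)
  have hcS : ∀ e ∈ c.edges, e ∈ (σ.graphOn S).edgeSet := by
    intro e he
    obtain ⟨a, -, i, rfl⟩ := mem_edgeSet_graphOn.1 (c.edges_subset_edgeSet he)
    by_contra haS
    have ha : a ∉ S := fun ha ↦ haS (mem_edgeSet_graphOn.2 ⟨a, ha, i, rfl⟩)
    have heven := even_count_edges_map_parityProj (i := i) hσ ha w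
    rw [← hperm.count_eq, List.count_eq_one_of_mem hc.edges_nodup he] at heven
    exact Nat.not_even_one heven
  have hgc : g ≤ c.length := by
    have h := hS.trans (egirth_le_length (hc.transfer hcS))
    rw [Walk.length_transfer] at h
    exact_mod_cast h
  have hcj : c.length ≤ j := by
    rw [← c.length_edges, hperm.length_eq, Walk.length_edges, Walk.length_map]
    exact hwj
  lia

end ParityLift

section Seed

variable {ι α β : Type*} {g : ℕ} {y δ : ℝ} {σ : PermFamily ι α} {S : Set α}

/-- The invariant of the tower of lifts: a family whose graph on `S` is simple with girth at least
`g`, all of whose induced matchings from `S` have at most `y * |α|` edges, and such that `S` misses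
fewer than `δ * |α|` left vertices. -/
structure IsSeed (g : ℕ) (y δ : ℝ) (σ : PermFamily ι α) (S : Set α) : Prop where
  simpleOn : σ.SimpleOn S
  le_egirth : (g : ℕ∞) ≤ (σ.graphOn S).egirth
  inducedMatchingBoundOn : σ.InducedMatchingBoundOn S (y * Nat.card α)
  ncard_compl_lt : (Sᶜ.ncard : ℝ) < δ * Nat.card α

namespace IsSeed

theorem parityLift [Finite ι] [Finite α] (h : IsSeed g y δ σ S) :
    IsSeed g y δ (σ.parityLift S) (Prod.fst ⁻¹' S) where
  simpleOn := h.simpleOn.of_mapsTo (semiconj_fst_voltageLift _ _) (Set.mapsTo_preimage _ _)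
  le_egirth := h.le_egirth.trans <|
    h.simpleOn.egirth_le_of_mapsTo (semiconj_fst_voltageLift _ _) (Set.mapsTo_preimage _ _)
  inducedMatchingBoundOn := by
    rw [Nat.card_prod, Nat.cast_mul, ← mul_assoc]
    exact h.inducedMatchingBoundOn.voltageLift fun a ha i ↦ if_pos ha
  ncard_compl_lt := by
    rw [← Set.preimage_compl, ← Set.prod_univ, Set.ncard_prod, Set.ncard_univ, Nat.card_prod,
      Nat.cast_mul, Nat.cast_mul, ← mul_assoc]
    exact mul_lt_mul_of_pos_right h.ncard_compl_lt (Nat.cast_pos.2 Nat.card_pos)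

theorem preimage {τ : PermFamily ι β} (h : IsSeed g y δ σ S) (e : β ≃ α)
    (he : ∀ i, Function.Semiconj e (τ i) (σ i)) : IsSeed g y δ τ (e ⁻¹' S) where
  simpleOn := h.simpleOn.of_mapsTo he (Set.mapsTo_preimage _ _)
  le_egirth := h.le_egirth.trans <|
    h.simpleOn.egirth_le_of_mapsTo he (Set.mapsTo_preimage _ _)
  inducedMatchingBoundOn := by
    rw [Nat.card_congr e]
    exact h.inducedMatchingBoundOn.preimage e he
  ncard_compl_lt := by
    rw [← Set.preimage_compl, Set.ncard_preimage_of_injective_subset_range e.injective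
      (by simp), Nat.card_congr e]
    exact h.ncard_compl_lt

theorem exists_fin_parityLift [Finite ι] [Finite α] (h : IsSeed g y δ σ S) :
    ∃ (n : ℕ) (τ : PermFamily ι (Fin n)) (T : Set (Fin n)), IsSeed g y δ τ T ∧
      τ.SimpleOn Set.univ ∧
      ((σ.parityLift S).graphOn Set.univ).egirth ≤ (τ.graphOn Set.univ).egirth := by
  let e := (Finite.equivFin (α × (ι × α → ZMod 2))).symm
  let τ : PermFamily ι (Fin _) := fun i ↦ e.symm.permCongr (σ.parityLift S i)
  have he (i : ι) : Function.Semiconj e (τ i) (σ.parityLift S i) := fun k ↦ by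
    simp [τ, Equiv.permCongr_apply]
  have hsimple := h.simpleOn.parityLift
  exact ⟨_, τ, _, h.parityLift.preimage e he, hsimple.of_mapsTo he (Set.mapsTo_univ _ _),
    hsimple.egirth_le_of_mapsTo he (Set.mapsTo_univ _ _)⟩

theorem exists_fin_le_egirth [Finite ι] [Finite α] (h : IsSeed g y δ σ S) {j : ℕ} (hj : j ≤ g) :
    ∃ (n : ℕ) (τ : PermFamily ι (Fin n)) (T : Set (Fin n)), IsSeed g y δ τ T ∧
      τ.SimpleOn Set.univ ∧ (j : ℕ∞) ≤ (τ.graphOn Set.univ).egirth := by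
  induction j with
  | zero =>
    obtain ⟨n, τ, T, hτ, hsimple, -⟩ := h.exists_fin_parityLift
    exact ⟨n, τ, T, hτ, hsimple, by simp⟩
  | succ j ih =>
    obtain ⟨n, τ, T, hτ, hsimple, hgirth⟩ := ih (by lia)
    obtain ⟨n', τ', T', hτ', hsimple', hle⟩ := hτ.exists_fin_parityLift
    exact ⟨n', τ', T', hτ', hsimple',
      (succ_le_egirth_parityLift hsimple hτ.le_egirth hgirth (by lia)).trans hle⟩

theorem ncard_lt [Finite α] [Nonempty ι] (h : IsSeed g y δ σ S) {M : Set (Sym2 (α ⊕ α))}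
    (hM : IsInducedMatching (σ.graphOn Set.univ) M) : (M.ncard : ℝ) < (y + δ) * Nat.card α := by
  rw [add_mul]
  exact (h.inducedMatchingBoundOn.ncard_le hM).trans_lt (by gcongr; exact h.ncard_compl_lt)

theorem nonempty (h : IsSeed g y δ σ S) : Nonempty α := by
  by_contra! hα
  have hlt := h.ncard_compl_lt
  rw [Nat.card_of_isEmpty, Nat.cast_zero, mul_zero] at hlt
  exact hlt.not_ge (Nat.cast_nonneg _)

end IsSeed

end Seed

section Avoiding

variable {α : Type*} [Fintype α] [DecidableEq α]

/-- The permutations that map no element of `X` into `Y`. -/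
def avoiding (X Y : Finset α) : Finset (Equiv.Perm α) := {π | ∀ x ∈ X, π x ∉ Y}

theorem mem_avoiding {X Y : Finset α} {π : Equiv.Perm α} :
    π ∈ avoiding X Y ↔ ∀ x ∈ X, π x ∉ Y := by
  simp [avoiding]

theorem card_avoiding_map (X Y : Finset α) (ρ : Equiv.Perm α) :
    #(avoiding (X.map ρ.toEmbedding) Y) = #(avoiding X Y) :=
  Finset.card_equiv (Equiv.mulRight ρ) fun π ↦ by
    rw [mem_avoiding, mem_avoiding, Finset.forall_mem_map]
    rfl

theorem card_avoiding_insert {X Y : Finset α} {x x' : α} (hx : x ∉ X) (hx' : x' ∉ X) :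
    #(avoiding (insert x' X) Y) = #(avoiding (insert x X) Y) := by
  rw [← card_avoiding_map (insert x X) Y (swap x x'), Finset.map_insert,
    Equiv.coe_toEmbedding, swap_apply_left]
  have hX : X.image (swap x x') = X.image id := Finset.image_congr fun a ha ↦
    swap_apply_of_ne_of_ne (ne_of_mem_of_not_mem ha hx) (ne_of_mem_of_not_mem ha hx')
  rw [Finset.map_eq_image, Equiv.coe_toEmbedding, hX, Finset.image_id]

theorem card_sub_mul_card_avoiding_insert {X Y : Finset α} {x : α} (hx : x ∉ X) :
    (Fintype.card α - #X) * #(avoiding (insert x X) Y) =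
      #(avoiding X Y) * (Fintype.card α - #X - #Y) := by
  rw [← Finset.card_compl]
  refine Finset.card_mul_eq_card_mul (fun x' π ↦ π x' ∉ Y) (fun x' hx' ↦ ?_) fun π hπ ↦ ?_
  · rw [← card_avoiding_insert hx (Finset.mem_compl.1 hx')]
    congr 1
    ext π
    simp [mem_avoiding, Finset.mem_bipartiteAbove, and_comm]
  · have hsub : Y.map π.symm.toEmbedding ⊆ Xᶜ := by
      intro a ha
      obtain ⟨b, hb, rfl⟩ := Finset.mem_map.1 ha
      exact Finset.mem_compl.2 fun hX ↦ mem_avoiding.1 hπ _ hX (by simpa using hb)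
    rw [← Finset.card_map π.symm.toEmbedding (s := Y), ← Finset.card_sdiff_of_subset hsub]
    congr 1
    ext a
    simp [Finset.mem_bipartiteBelow]

theorem card_avoiding_insert_mul_le {X Y : Finset α} {x : α} (hx : x ∉ X) :
    #(avoiding (insert x X) Y) * Fintype.card α ≤ #(avoiding X Y) * (Fintype.card α - #Y) := by
  have hX : #X < Fintype.card α := Finset.card_lt_univ_of_notMem hx
  have hsub : (Fintype.card α - #X - #Y) * Fintype.card α ≤
      (Fintype.card α - #X) * (Fintype.card α - #Y) := by
    rcases le_total (Fintype.card α) (#X + #Y) with hle | hle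
    · simp [Nat.sub_sub, Nat.sub_eq_zero_of_le hle]
    · obtain ⟨q, hq⟩ := Nat.exists_eq_add_of_le hle
      rw [Nat.sub_sub, hq, Nat.add_sub_cancel_left, add_assoc, Nat.add_sub_cancel_left,
        add_left_comm, Nat.add_sub_cancel_left]
      nlinarith
  refine le_of_mul_le_mul_left ?_ (Nat.sub_pos_of_lt hX)
  calc (Fintype.card α - #X) * (#(avoiding (insert x X) Y) * Fintype.card α)
      = #(avoiding X Y) * ((Fintype.card α - #X - #Y) * Fintype.card α) := by
        rw [← mul_assoc, card_sub_mul_card_avoiding_insert hx, mul_assoc]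
    _ ≤ #(avoiding X Y) * ((Fintype.card α - #X) * (Fintype.card α - #Y)) := by gcongr
    _ = (Fintype.card α - #X) * (#(avoiding X Y) * (Fintype.card α - #Y)) := by ring

theorem card_avoiding_le (X Y : Finset α) :
    (#(avoiding X Y) : ℝ) ≤
      (Fintype.card α).factorial * (1 - (#Y : ℝ) / Fintype.card α) ^ #X := by
  have hY : #Y ≤ Fintype.card α := Finset.card_le_univ Y
  have hY' : 0 ≤ 1 - (#Y : ℝ) / Fintype.card α :=
    sub_nonneg.2 (div_le_one_of_le₀ (by exact_mod_cast hY) (by positivity))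
  induction X using Finset.induction_on with
  | empty => simp [avoiding, Fintype.card_perm]
  | insert x X hx ih =>
    have hcard : (0 : ℝ) < Fintype.card α := Nat.cast_pos.2 (Fintype.card_pos_iff.2 ⟨x⟩)
    have hinsert : (#(avoiding (insert x X) Y) : ℝ) ≤
        #(avoiding X Y) * (1 - (#Y : ℝ) / Fintype.card α) := by
      rw [one_sub_div hcard.ne', ← mul_div_assoc, le_div_iff₀ hcard, ← Nat.cast_sub hY]
      exact_mod_cast card_avoiding_insert_mul_le hx
    rw [Finset.card_insert_of_notMem hx, pow_succ, ← mul_assoc]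
    exact hinsert.trans (by gcongr)

end Avoiding

section LabelledEdges

variable {ι α : Type*} [Fintype ι] [Fintype α] [DecidableEq α]

/-- The labelled edges of the multigraph of `σ`: the triple `(i, a, b)` stands for the edge with
label `i` from the left vertex `a` to the right vertex `b`. -/
def labelledEdges (σ : PermFamily ι α) : Finset (ι × α × α) := {t | σ t.1 t.2.1 = t.2.2}

theorem mem_labelledEdges {σ : PermFamily ι α} {i : ι} {a b : α} :
    (i, a, b) ∈ σ.labelledEdges ↔ σ i a = b := by
  simp [labelledEdges]

variable [DecidableEq ι]

/-- The families whose multigraph contains all the labelled edges in `T`. -/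
def containing (T : Finset (ι × α × α)) : Finset (PermFamily ι α) := {σ | T ⊆ σ.labelledEdges}

theorem mem_containing_iff_subset {T : Finset (ι × α × α)} {σ : PermFamily ι α} :
    σ ∈ containing T ↔ T ⊆ σ.labelledEdges := by
  simp [containing]

theorem mem_containing {T : Finset (ι × α × α)} {σ : PermFamily ι α} :
    σ ∈ containing T ↔ ∀ i a b, (i, a, b) ∈ T → σ i a = b := by
  simp [mem_containing_iff_subset, labelledEdges, Finset.subset_iff]

theorem card_containing_insert_le {T : Finset (ι × α × α)} {i : ι} {a b b' : α}
    (hT : (i, a, b) ∉ T) (hb' : ∀ t ∈ T, t.2.2 ≠ b') :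
    #(containing (insert (i, a, b) T)) ≤ #{σ ∈ containing T | σ i a = b'} := by
  refine Finset.card_le_card_of_injOn (Pi.mulSingle i (swap b b') * ·) (fun σ hσ ↦ ?_)
    (mul_right_injective _).injOn
  have hmem := mem_containing.1 hσ
  have hσi : σ i a = b := hmem i a b (Finset.mem_insert_self _ _)
  refine Finset.mem_filter.2 ⟨mem_containing.2 fun j c d hT' ↦ ?_, by simp [hσi]⟩
  have hσj : σ j c = d := hmem j c d (Finset.mem_insert_of_mem hT')
  rcases eq_or_ne j i with rfl | hij
  · have hdb : d ≠ b := by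
      rintro rfl
      obtain rfl := (σ j).injective (hσj.trans hσi.symm)
      exact hT hT'
    simp [hσj, swap_apply_of_ne_of_ne hdb (hb' _ hT')]
  · simp [Pi.mulSingle_eq_of_ne hij, hσj]

theorem card_containing_insert_mul_le {T : Finset (ι × α × α)} {t : ι × α × α} (ht : t ∉ T) :
    #(containing (insert t T)) * (Fintype.card α - #T) ≤ #(containing T) := by
  obtain ⟨i, a, b⟩ := t
  have hcompl : Fintype.card α - #T ≤ #(T.image fun t ↦ t.2.2)ᶜ := by
    rw [Finset.card_compl]
    exact Nat.sub_le_sub_left Finset.card_image_le _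
  calc #(containing (insert (i, a, b) T)) * (Fintype.card α - #T)
      ≤ #(T.image fun t ↦ t.2.2)ᶜ * #(containing (insert (i, a, b) T)) := by
        rw [mul_comm]
        gcongr
    _ ≤ #(containing T) * 1 := by
        refine Finset.card_mul_le_card_mul (fun b' σ ↦ σ i a = b') (fun b' hb' ↦ ?_) fun σ _ ↦ ?_
        · exact card_containing_insert_le ht fun t ht heq ↦
            Finset.mem_compl.1 hb' (Finset.mem_image.2 ⟨t, ht, heq⟩)
        · refine Finset.card_le_one.2 fun c hc d hd ↦ ?_
          rw [Finset.mem_bipartiteBelow] at hc hd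
          exact hc.2.symm.trans hd.2
    _ = #(containing T) := mul_one _

theorem card_containing_mul_pow_le {T : Finset (ι × α × α)} {m : ℕ} (hT : #T ≤ m) :
    #(containing T) * (Fintype.card α - m) ^ #T ≤ Fintype.card (PermFamily ι α) := by
  induction T using Finset.induction_on with
  | empty => simpa using Finset.card_le_univ (containing (ι := ι) (α := α) ∅)
  | insert t T ht ih =>
    rw [Finset.card_insert_of_notMem ht] at hT ⊢
    calc #(containing (insert t T)) * (Fintype.card α - m) ^ (#T + 1)
        = #(containing (insert t T)) * (Fintype.card α - m) * (Fintype.card α - m) ^ #T := by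
          ring
      _ ≤ #(containing (insert t T)) * (Fintype.card α - #T) * (Fintype.card α - m) ^ #T := by
          gcongr
          lia
      _ ≤ #(containing T) * (Fintype.card α - m) ^ #T := by
          gcongr
          exact card_containing_insert_mul_le ht
      _ ≤ Fintype.card (PermFamily ι α) := ih (by lia)

end LabelledEdges

section LargeSelection

variable {ι α : Type*} {σ : PermFamily ι α}

/-- A relaxed form of `σ` having an induced matching of size `k`, suited to a union bound: for
some `k`-sets `X` and `Y` and some labelling `c` of `X`, an edge at `x ∈ X` can end in `Y` only if
its label is `c x`. -/
def HasLargeSelection (k : ℕ) (σ : PermFamily ι α) : Prop :=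
  ∃ X Y : Finset α, #X = k ∧ #Y = k ∧ ∃ c : X → ι, ∀ i, ∀ x : X, c x ≠ i → σ i x ∉ Y

theorem InducedMatchingBoundOn.of_not_hasLargeSelection {S : Set α} (hσ : σ.SimpleOn S) {t : ℝ}
    (ht : ¬ σ.HasLargeSelection ⌈t⌉₊) : σ.InducedMatchingBoundOn S t := by
  classical
  refine fun X f hXS hX ↦ le_of_lt (not_le.1 fun hlt ↦ ht ?_)
  obtain ⟨X', hX'X, hX'⟩ := Finset.exists_subset_card_eq (Nat.ceil_le.2 hlt)
  replace hX := hX.mono hX'X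
  have hinj : Set.InjOn (fun b ↦ σ (f b) b) X' := fun a ha b hb hab ↦ hX a ha b hb _ hab
  refine ⟨X', X'.image fun b ↦ σ (f b) b, hX', (Finset.card_image_of_injOn hinj).trans hX',
    fun x ↦ f x, fun i ⟨x, hx⟩ hne hmem ↦ hne ?_⟩
  obtain ⟨b, hb, hbx⟩ := Finset.mem_image.1 hmem
  obtain rfl := hX x hx b hb i hbx.symm
  exact hσ x (hXS (hX'X hx)) hbx

variable [Fintype ι] [Fintype α] [DecidableEq ι] [DecidableEq α]

theorem sum_card_filter_ne {κ : Type*} [Fintype κ] (c : κ → ι) :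
    ∑ i, #{x | c x ≠ i} = (Fintype.card ι - 1) * Fintype.card κ := by
  simp only [Finset.card_filter]
  rw [Finset.sum_comm]
  simp only [← Finset.card_filter, Finset.filter_ne, Finset.card_erase_of_mem (Finset.mem_univ _)]
  simp [mul_comm]

theorem card_filter_forall_notMem_le {X Y : Finset α} (c : X → ι) :
    (#{σ : PermFamily ι α | ∀ i, ∀ x : X, c x ≠ i → σ i x ∉ Y} : ℝ) ≤
      Fintype.card (PermFamily ι α) *
        (1 - (#Y : ℝ) / Fintype.card α) ^ ((Fintype.card ι - 1) * #X) := by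
  let X' (i : ι) : Finset α := ({x | c x ≠ i} : Finset X).map (Function.Embedding.subtype _)
  have hpi : ({σ : PermFamily ι α | ∀ i, ∀ x : X, c x ≠ i → σ i x ∉ Y} : Finset _) =
      Fintype.piFinset fun i ↦ avoiding (X' i) Y := by
    ext σ
    simp [X', mem_avoiding]
  have hsum : ∑ i, #(X' i) = (Fintype.card ι - 1) * #X := by
    simp only [X', Finset.card_map, sum_card_filter_ne, Fintype.card_coe]
  rw [hpi, Fintype.card_piFinset, Nat.cast_prod]
  calc ∏ i, (#(avoiding (X' i) Y) : ℝ)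
      ≤ ∏ i, ((Fintype.card α).factorial * (1 - (#Y : ℝ) / Fintype.card α) ^ #(X' i)) :=
        Finset.prod_le_prod (fun _ _ ↦ by positivity) fun i _ ↦ card_avoiding_le _ _
    _ = _ := by
        rw [Finset.prod_mul_distrib, Finset.prod_pow_eq_pow_sum, hsum]
        simp [Fintype.card_perm]

open scoped Classical in
theorem card_hasLargeSelection_le (k : ℕ) :
    (#{σ : PermFamily ι α | σ.HasLargeSelection k} : ℝ) ≤
      (Fintype.card α).choose k ^ 2 * Fintype.card ι ^ k * (Fintype.card (PermFamily ι α) *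
        (1 - (k : ℝ) / Fintype.card α) ^ ((Fintype.card ι - 1) * k)) := by
  let K : Finset (Finset α) := Finset.powersetCard k Finset.univ
  have hK : #K = (Fintype.card α).choose k := by simp [K]
  have hcover : ({σ : PermFamily ι α | σ.HasLargeSelection k} : Finset _) ⊆
      (K ×ˢ K).biUnion fun P ↦ (Finset.univ : Finset (P.1 → ι)).biUnion fun c ↦
        {σ | ∀ i, ∀ x : P.1, c x ≠ i → σ i x ∉ P.2} := by
    intro σ hσ
    obtain ⟨X, Y, hX, hY, c, hc⟩ := (Finset.mem_filter.1 hσ).2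
    simp only [Finset.mem_biUnion, Finset.mem_filter, Finset.mem_univ, true_and]
    exact ⟨(X, Y), by simp [K, hX, hY], c, hc⟩
  set q : ℝ := Fintype.card (PermFamily ι α) *
    (1 - (k : ℝ) / Fintype.card α) ^ ((Fintype.card ι - 1) * k)
  calc (#{σ : PermFamily ι α | σ.HasLargeSelection k} : ℝ)
      ≤ ∑ P ∈ K ×ˢ K, ∑ c : P.1 → ι,
          (#{σ : PermFamily ι α | ∀ i, ∀ x : P.1, c x ≠ i → σ i x ∉ P.2} : ℝ) := by
        exact_mod_cast (Finset.card_le_card hcover).trans <| Finset.card_biUnion_le.trans <|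
          Finset.sum_le_sum fun _ _ ↦ Finset.card_biUnion_le
    _ ≤ ∑ P ∈ K ×ˢ K, ∑ _c : P.1 → ι, q := by
        refine Finset.sum_le_sum fun P hP ↦ Finset.sum_le_sum fun c _ ↦ ?_
        obtain ⟨hX, hY⟩ : #P.1 = k ∧ #P.2 = k := by simpa [K] using hP
        simpa only [q, hX, hY] using card_filter_forall_notMem_le (Y := P.2) c
    _ = ∑ _P ∈ K ×ˢ K, Fintype.card ι ^ k * q := by
        refine Finset.sum_congr rfl fun P hP ↦ ?_
        have hX : #P.1 = k := by simp_all [K]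
        simp [hX]
    _ = (Fintype.card α).choose k ^ 2 * Fintype.card ι ^ k * q := by
        rw [Finset.sum_const, Finset.card_product, hK, nsmul_eq_mul]
        push_cast
        ring

end LargeSelection

section LargeSelectionBound

variable {ι α : Type*} [Fintype ι] [Fintype α] [DecidableEq ι] [DecidableEq α]

open scoped Classical in
theorem card_hasLargeSelection_le_mul_pow {y : ℝ} (hy : 0 < y) {k : ℕ} (hk : k ≤ Fintype.card α)
    (hyk : y * Fintype.card α ≤ k) :
    (#{σ : PermFamily ι α | σ.HasLargeSelection k} : ℝ) ≤ Fintype.card (PermFamily ι α) *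
      ((Real.exp 1 / y) ^ 2 * Fintype.card ι * (1 - y) ^ (Fintype.card ι - 1)) ^ k := by
  rcases k.eq_zero_or_pos with rfl | hk0
  · rw [pow_zero, mul_one]
    exact_mod_cast Finset.card_le_univ _
  have hk0' : (0 : ℝ) < k := Nat.cast_pos.2 hk0
  have hα : (0 : ℝ) < Fintype.card α := by exact_mod_cast hk0.trans_le hk
  have hchoose : ((Fintype.card α).choose k : ℝ) ≤ (Real.exp 1 / y) ^ k := by
    refine (choose_le_exp_one_mul_div_pow _ k).trans ?_
    gcongr ?_ ^ k
    rw [div_le_div_iff₀ hk0' hy, mul_assoc]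
    gcongr
    rwa [mul_comm]
  have hnonneg : 0 ≤ 1 - (k : ℝ) / Fintype.card α :=
    sub_nonneg.2 (div_le_one_of_le₀ (by exact_mod_cast hk) hα.le)
  have hle : 1 - (k : ℝ) / Fintype.card α ≤ 1 - y :=
    sub_le_sub_left ((le_div_iff₀ hα).2 hyk) 1
  calc (#{σ : PermFamily ι α | σ.HasLargeSelection k} : ℝ)
      ≤ _ := card_hasLargeSelection_le k
    _ ≤ ((Real.exp 1 / y) ^ k) ^ 2 * Fintype.card ι ^ k * (Fintype.card (PermFamily ι α) *
          (1 - y) ^ ((Fintype.card ι - 1) * k)) := by gcongr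
    _ = _ := by
        rw [pow_mul (1 - y), mul_pow, mul_pow]
        ring

open scoped Classical in
theorem card_hasLargeSelection_ceil_lt [Nonempty α] (hι : 21 ≤ Fintype.card ι) :
    (#{σ : PermFamily ι α |
      σ.HasLargeSelection ⌈matchingRate (Fintype.card ι) * Fintype.card α⌉₊} : ℝ) <
        Fintype.card (PermFamily ι α) / 2 := by
  have hy0 := matchingRate_pos hι
  have hy_half := matchingRate_le_half hι
  have hq := sq_exp_one_div_matchingRate_mul_pow_lt_half hι
  set y := matchingRate (Fintype.card ι)
  have hα : (0 : ℝ) < Fintype.card α := Nat.cast_pos.2 Fintype.card_pos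
  have hk : ⌈y * Fintype.card α⌉₊ ≤ Fintype.card α :=
    Nat.ceil_le.2 (mul_le_of_le_one_left hα.le (by linarith))
  have hq0 : 0 ≤ (Real.exp 1 / y) ^ 2 * Fintype.card ι * (1 - y) ^ (Fintype.card ι - 1) :=
    mul_nonneg (by positivity) (pow_nonneg (by linarith) _)
  calc _ ≤ _ := card_hasLargeSelection_le_mul_pow hy0 hk (Nat.le_ceil _)
    _ ≤ Fintype.card (PermFamily ι α) *
          ((Real.exp 1 / y) ^ 2 * Fintype.card ι * (1 - y) ^ (Fintype.card ι - 1)) := by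
        gcongr
        exact pow_le_of_le_one hq0 (by linarith) (Nat.ceil_pos.2 (mul_pos hy0 hα)).ne'
    _ < Fintype.card (PermFamily ι α) * (1 / 2) := by gcongr
    _ = _ := mul_one_div _ _

end LargeSelectionBound

section ShortCycles

variable (ι α : Type*) [Fintype ι] [Fintype α] [DecidableEq ι] [DecidableEq α]

/-- The sets of `m` labelled edges spanned by a set `W` of `m` vertices. Both the edge set of a
cycle of length `m` and, for `m = 2`, a pair of parallel edges are of this form. -/
def cycleConfigs (m : ℕ) : Finset (Finset (ι × α × α)) :=
  (Finset.powersetCard m (Finset.univ : Finset (α ⊕ α))).biUnion fun W ↦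
    Finset.powersetCard m (Finset.univ ×ˢ W.toLeft ×ˢ W.toRight)

theorem card_cycleConfigs_le (m : ℕ) :
    #(cycleConfigs ι α m) ≤ (2 * Fintype.card α) ^ m * (Fintype.card ι * m ^ 2) ^ m := by
  have hW {W : Finset (α ⊕ α)} (hW : #W = m) :
      #(Finset.powersetCard m ((Finset.univ : Finset ι) ×ˢ W.toLeft ×ˢ W.toRight)) ≤
        (Fintype.card ι * m ^ 2) ^ m := by
    rw [Finset.card_powersetCard, Finset.card_product, Finset.card_product, Finset.card_univ, sq]
    refine (Nat.choose_le_pow _ _).trans ?_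
    gcongr
    · exact Finset.card_toLeft_le.trans hW.le
    · exact Finset.card_toRight_le.trans hW.le
  calc #(cycleConfigs ι α m)
      ≤ #(Finset.powersetCard m (Finset.univ : Finset (α ⊕ α))) *
          (Fintype.card ι * m ^ 2) ^ m :=
        Finset.card_biUnion_le_card_mul _ _ _ fun W h ↦ hW (Finset.mem_powersetCard.1 h).2
    _ ≤ (2 * Fintype.card α) ^ m * (Fintype.card ι * m ^ 2) ^ m := by
        gcongr
        rw [Finset.card_powersetCard, Finset.card_univ, Fintype.card_sum, ← two_mul]
        exact Nat.choose_le_pow _ _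

variable {ι α}

theorem card_of_mem_cycleConfigs {m : ℕ} {T : Finset (ι × α × α)} (hT : T ∈ cycleConfigs ι α m) :
    #T = m := by
  obtain ⟨W, -, hT⟩ := Finset.mem_biUnion.1 hT
  exact (Finset.mem_powersetCard.1 hT).2

/-- The left vertices on cycles of length less than `g` of the multigraph of `σ`, where parallel
edges count as a cycle of length `2`. The set may contain further vertices, coming from the members
of `cycleConfigs` that are not cycles. -/
def shortCycleVertices (σ : PermFamily ι α) (g : ℕ) : Finset α :=
  (Finset.range g).biUnion fun m ↦
    ({T ∈ cycleConfigs ι α m | T ⊆ σ.labelledEdges}).biUnion fun T ↦ T.image fun t ↦ t.2.1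

variable {σ : PermFamily ι α} {g : ℕ}

theorem mem_shortCycleVertices_of_subset {T : Finset (ι × α × α)}
    {W : Finset (α ⊕ α)} (hT : T ⊆ σ.labelledEdges) (hTg : #T < g) (hWT : #W = #T)
    (hTW : ∀ t ∈ T, .inl t.2.1 ∈ W ∧ .inr t.2.2 ∈ W) {t : ι × α × α} (ht : t ∈ T) :
    t.2.1 ∈ σ.shortCycleVertices g := by
  refine Finset.mem_biUnion.2 ⟨#T, Finset.mem_range.2 hTg, Finset.mem_biUnion.2 ⟨T, ?_,
    Finset.mem_image_of_mem _ ht⟩⟩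
  refine Finset.mem_filter.2 ⟨Finset.mem_biUnion.2 ⟨W, ?_, ?_⟩, hT⟩
  · exact Finset.mem_powersetCard.2 ⟨Finset.subset_univ _, hWT⟩
  · exact Finset.mem_powersetCard.2 ⟨fun t ht ↦ by simpa using hTW t ht, rfl⟩

theorem simpleOn_compl_shortCycleVertices (hg : 3 ≤ g) :
    σ.SimpleOn (↑(σ.shortCycleVertices g))ᶜ := by
  intro a ha i j hij
  by_contra hne
  have hT : #({(i, a, σ i a), (j, a, σ i a)} : Finset (ι × α × α)) = 2 :=
    Finset.card_pair (by simp [hne])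
  refine ha (mem_shortCycleVertices_of_subset (t := (i, a, σ i a))
    (T := {(i, a, σ i a), (j, a, σ i a)}) (W := {.inl a, .inr (σ i a)}) ?_ (by lia) ?_ (by simp)
    (by simp))
  · simp [Finset.insert_subset_iff, mem_labelledEdges, ← hij]
  · rw [hT]
    exact Finset.card_pair Sum.inl_ne_inr

theorem le_egirth_compl_shortCycleVertices :
    (g : ℕ∞) ≤ (σ.graphOn (↑(σ.shortCycleVertices g))ᶜ).egirth := by
  refine le_egirth.2 fun x w hw ↦ ?_
  by_contra! hlt
  have hedge : ∀ e ∈ w.edges, ∃ t ∈ σ.labelledEdges,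
      t.2.1 ∉ σ.shortCycleVertices g ∧ s(.inl t.2.1, .inr t.2.2) = e := fun e he ↦ by
    obtain ⟨a, ha, i, rfl⟩ := mem_edgeSet_graphOn.1 (w.edges_subset_edgeSet he)
    exact ⟨(i, a, σ i a), mem_labelledEdges.2 rfl, ha, rfl⟩
  obtain ⟨e, he⟩ := List.exists_mem_of_ne_nil _ (Walk.edges_eq_nil.not.2 hw.not_nil)
  have : Nonempty (ι × α × α) := (hedge e he).nonempty
  choose! f hf hf_notMem hf_edge using hedge
  have hcard : #(w.edges.toFinset.image f) = w.length := by
    have hinj : Set.InjOn f ↑w.edges.toFinset := fun e he e' he' heq ↦ by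
      rw [Finset.mem_coe, List.mem_toFinset] at he he'
      rw [← hf_edge e he, ← hf_edge e' he', heq]
    rw [Finset.card_image_of_injOn hinj, List.toFinset_card_of_nodup hw.edges_nodup,
      Walk.length_edges]
  refine hf_notMem e he (mem_shortCycleVertices_of_subset (W := w.support.toFinset)
    (T := w.edges.toFinset.image f) ?_ ?_ ?_ ?_ (Finset.mem_image_of_mem f (by simpa using he)))
  · simpa [Finset.image_subset_iff] using hf
  · rw [hcard]
    exact_mod_cast hlt
  · rw [hcard, card_toFinset_support_of_isCycle hw]
  · simp only [Finset.forall_mem_image, List.mem_toFinset]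
    intro e he
    have hmem := he
    rw [← hf_edge e he] at hmem
    exact ⟨w.fst_mem_support_of_mem_edges hmem, w.snd_mem_support_of_mem_edges hmem⟩

end ShortCycles

section ShortCyclesBound

variable {ι α : Type*} [Fintype ι] [Fintype α] [DecidableEq ι] [DecidableEq α] {g : ℕ}

theorem card_containing_mul_card_pow_le {T : Finset (ι × α × α)}
    (hT : 2 * #T ≤ Fintype.card α) :
    #(containing T) * Fintype.card α ^ #T ≤ 2 ^ #T * Fintype.card (PermFamily ι α) :=
  calc #(containing T) * Fintype.card α ^ #T
      ≤ #(containing T) * (2 * (Fintype.card α - #T)) ^ #T := by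
        gcongr
        lia
    _ = 2 ^ #T * (#(containing T) * (Fintype.card α - #T) ^ #T) := by ring
    _ ≤ 2 ^ #T * Fintype.card (PermFamily ι α) := by
        gcongr
        exact card_containing_mul_pow_le le_rfl

/-- A bound, independent of the number of vertices, for the expected number of short cycle vertices
of a random family with `d` labels. -/
def shortCycleBound (d g : ℕ) : ℕ := ∑ m ∈ Finset.range g, m * (4 * d * m ^ 2) ^ m

theorem sum_card_containing_cycleConfigs_le {m : ℕ} (hm : 2 * m ≤ Fintype.card α) :
    ∑ T ∈ cycleConfigs ι α m, #(containing T) ≤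
      Fintype.card (PermFamily ι α) * (4 * Fintype.card ι * m ^ 2) ^ m := by
  have hpos : 0 < Fintype.card α ^ m := by
    rcases m.eq_zero_or_pos with rfl | hm0
    · simp
    · exact pow_pos (by lia) m
  refine le_of_mul_le_mul_right ?_ hpos
  calc (∑ T ∈ cycleConfigs ι α m, #(containing T)) * Fintype.card α ^ m
      = ∑ T ∈ cycleConfigs ι α m, #(containing T) * Fintype.card α ^ m := Finset.sum_mul ..
    _ ≤ ∑ _T ∈ cycleConfigs ι α m, 2 ^ m * Fintype.card (PermFamily ι α) := by
        refine Finset.sum_le_sum fun T hT ↦ ?_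
        obtain rfl := card_of_mem_cycleConfigs hT
        exact card_containing_mul_card_pow_le hm
    _ ≤ (2 * Fintype.card α) ^ m * (Fintype.card ι * m ^ 2) ^ m *
          (2 ^ m * Fintype.card (PermFamily ι α)) := by
        rw [Finset.sum_const, smul_eq_mul]
        gcongr
        exact card_cycleConfigs_le ι α m
    _ = Fintype.card (PermFamily ι α) * (4 * Fintype.card ι * m ^ 2) ^ m *
          Fintype.card α ^ m := by
        rw [show 4 * Fintype.card ι * m ^ 2 = 2 * 2 * (Fintype.card ι * m ^ 2) by ring]
        simp only [mul_pow]
        ring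

theorem sum_card_shortCycleVertices_le (hg : 2 * g ≤ Fintype.card α) :
    ∑ σ : PermFamily ι α, #(σ.shortCycleVertices g) ≤
      Fintype.card (PermFamily ι α) * shortCycleBound (Fintype.card ι) g := by
  have hσ (σ : PermFamily ι α) : #(σ.shortCycleVertices g) ≤
      ∑ m ∈ Finset.range g, ∑ T ∈ cycleConfigs ι α m, if σ ∈ containing T then m else 0 := by
    refine Finset.card_biUnion_le.trans (Finset.sum_le_sum fun m _ ↦ ?_)
    rw [← Finset.sum_filter]
    simp only [mem_containing_iff_subset]
    refine Finset.card_biUnion_le.trans (Finset.sum_le_sum fun T hT ↦ ?_)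
    exact Finset.card_image_le.trans
      (card_of_mem_cycleConfigs (Finset.mem_of_mem_filter T hT)).le
  calc ∑ σ : PermFamily ι α, #(σ.shortCycleVertices g)
      ≤ ∑ σ : PermFamily ι α, ∑ m ∈ Finset.range g, ∑ T ∈ cycleConfigs ι α m,
          if σ ∈ containing T then m else 0 := Finset.sum_le_sum fun σ _ ↦ hσ σ
    _ = ∑ m ∈ Finset.range g, m * ∑ T ∈ cycleConfigs ι α m, #(containing T) := by
        rw [Finset.sum_comm]
        refine Finset.sum_congr rfl fun m _ ↦ ?_
        rw [Finset.sum_comm, Finset.mul_sum]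
        refine Finset.sum_congr rfl fun T _ ↦ ?_
        simp [mul_comm]
    _ ≤ ∑ m ∈ Finset.range g,
          m * (Fintype.card (PermFamily ι α) * (4 * Fintype.card ι * m ^ 2) ^ m) := by
        gcongr with m hm
        exact sum_card_containing_cycleConfigs_le (by grind)
    _ = Fintype.card (PermFamily ι α) * shortCycleBound (Fintype.card ι) g := by
        rw [shortCycleBound, Finset.mul_sum]
        exact Finset.sum_congr rfl fun m _ ↦ mul_left_comm _ _ _

theorem card_le_card_shortCycleVertices_lt {δ : ℝ} (hg : 2 * g ≤ Fintype.card α)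
    (hα : 2 * shortCycleBound (Fintype.card ι) g < δ * Fintype.card α) :
    (#{σ : PermFamily ι α | δ * Fintype.card α ≤ #(σ.shortCycleVertices g)} : ℝ) <
      Fintype.card (PermFamily ι α) / 2 := by
  have hpos : 0 < δ * Fintype.card α := lt_of_le_of_lt (by positivity) hα
  have hsum : ∑ σ : PermFamily ι α, (#(σ.shortCycleVertices g) : ℝ) ≤
      Fintype.card (PermFamily ι α) * shortCycleBound (Fintype.card ι) g := by
    exact_mod_cast sum_card_shortCycleVertices_le hg
  refine lt_of_mul_lt_mul_right ?_ hpos.le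
  calc _ ≤ ∑ σ : PermFamily ι α with δ * Fintype.card α ≤ #(σ.shortCycleVertices g),
          (#(σ.shortCycleVertices g) : ℝ) := by
        rw [← nsmul_eq_mul]
        exact Finset.card_nsmul_le_sum _ _ _ fun σ hσ ↦ (Finset.mem_filter.1 hσ).2
    _ ≤ ∑ σ : PermFamily ι α, (#(σ.shortCycleVertices g) : ℝ) :=
        Finset.sum_le_univ_sum_of_nonneg fun _ ↦ Nat.cast_nonneg _
    _ ≤ Fintype.card (PermFamily ι α) * shortCycleBound (Fintype.card ι) g := hsum
    _ < Fintype.card (PermFamily ι α) * (δ * Fintype.card α / 2) := by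
        gcongr
        linarith
    _ = Fintype.card (PermFamily ι α) / 2 * (δ * Fintype.card α) := by ring

end ShortCyclesBound

section ExistsSeed

theorem exists_isSeed {ι : Type*} [Finite ι] (hι : 21 ≤ Nat.card ι) {g : ℕ} (hg : 3 ≤ g)
    {δ : ℝ} (hδ : 0 < δ) :
    ∃ (n : ℕ) (σ : PermFamily ι (Fin n)) (S : Set (Fin n)),
      IsSeed g (matchingRate (Nat.card ι)) δ σ S := by
  classical
  have := Fintype.ofFinite ι
  rw [Nat.card_eq_fintype_card] at hι ⊢
  let C := shortCycleBound (Fintype.card ι) g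
  let n := 2 * g + ⌊2 * C / δ⌋₊ + 1
  have hn : 2 * C < δ * n := by
    rw [← div_lt_iff₀' hδ]
    refine (Nat.lt_floor_add_one _).trans_le ?_
    exact_mod_cast (by lia : ⌊2 * C / δ⌋₊ + 1 ≤ n)
  let bad₁ : Finset (PermFamily ι (Fin n)) :=
    {σ | σ.HasLargeSelection ⌈matchingRate (Fintype.card ι) * n⌉₊}
  let bad₂ : Finset (PermFamily ι (Fin n)) := {σ | δ * n ≤ #(σ.shortCycleVertices g)}
  have hbad₁ : (#bad₁ : ℝ) < Fintype.card (PermFamily ι (Fin n)) / 2 := by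
    simpa only [Fintype.card_fin] using card_hasLargeSelection_ceil_lt (α := Fin n) hι
  have hbad₂ : (#bad₂ : ℝ) < Fintype.card (PermFamily ι (Fin n)) / 2 := by
    simpa only [Fintype.card_fin] using card_le_card_shortCycleVertices_lt (ι := ι) (α := Fin n)
      (g := g) (by simp only [Fintype.card_fin]; lia) (by simpa only [Fintype.card_fin] using hn)
  have hunion : #(bad₁ ∪ bad₂) < #(Finset.univ : Finset (PermFamily ι (Fin n))) := by
    rw [Finset.card_univ, ← Nat.cast_lt (α := ℝ)]
    calc (#(bad₁ ∪ bad₂) : ℝ) ≤ #bad₁ + #bad₂ := by exact_mod_cast Finset.card_union_le _ _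
      _ < Fintype.card (PermFamily ι (Fin n)) := by linarith
  obtain ⟨σ, -, hσ⟩ := Finset.exists_mem_notMem_of_card_lt_card hunion
  simp only [bad₁, bad₂, Finset.mem_union, Finset.mem_filter, Finset.mem_univ, true_and,
    not_or, not_le] at hσ
  have hsimple := simpleOn_compl_shortCycleVertices (σ := σ) hg
  refine ⟨n, σ, _, hsimple, le_egirth_compl_shortCycleVertices, ?_, ?_⟩
  · rw [Nat.card_fin]
    exact .of_not_hasLargeSelection hsimple hσ.1
  · rw [compl_compl, Set.ncard_coe_finset, Nat.card_fin]
    exact hσ.2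

end ExistsSeed

end PermFamily

/-- Proposition 7: for every `Δ ≥ 21` and `g ≥ 3`, there is a `Δ`-regular bipartite
graph with girth at least `g` and parts of equal size `n` in which every induced
matching has fewer than `⌈3 n ln Δ / Δ⌉` edges; consequently
`χ'_s(G) > Δ² / (3 ln Δ)`. -/
theorem exists_regular_bipartite_no_large_induced_matching (Δ g : ℕ)
    (hΔ : 21 ≤ Δ) (hg : 3 ≤ g) :
    ∃ (n : ℕ) (G : SimpleGraph (Fin n ⊕ Fin n)),
      (∀ a b : Fin n, ¬ G.Adj (Sum.inl a) (Sum.inl b)) ∧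
      (∀ a b : Fin n, ¬ G.Adj (Sum.inr a) (Sum.inr b)) ∧
      (∀ v, (G.neighborSet v).ncard = Δ) ∧
      (g : ℕ∞) ≤ G.egirth ∧
      (∀ M : Set (Sym2 (Fin n ⊕ Fin n)), IsInducedMatching G M →
        M.ncard < ⌈(3 : ℝ) * n * Real.log Δ / Δ⌉₊) ∧
      ((Δ : ℝ) ^ 2 / (3 * Real.log Δ) < (sChromIndex G : ℝ)) := by
  have hδ : (0 : ℝ) < 1 / (2 * Δ) := one_div_pos.2 (by exact_mod_cast (by lia : 0 < 2 * Δ))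
  obtain ⟨_, _, _, hseed⟩ := PermFamily.exists_isSeed (ι := Fin Δ) (by rwa [Nat.card_fin]) hg hδ
  obtain ⟨n, σ, S, hσ, hsimple, hgirth⟩ := hseed.exists_fin_le_egirth le_rfl
  have : Nonempty (Fin Δ) := ⟨⟨0, by lia⟩⟩
  have : Nonempty (Fin n) := hσ.nonempty
  have hmatching (M) (hM : IsInducedMatching (σ.graphOn Set.univ) M) :
      (M.ncard : ℝ) < 3 * Real.log Δ / Δ * Nat.card (Fin n) := by
    simpa only [Nat.card_fin, matchingRate_add] using hσ.ncard_lt hM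
  refine ⟨n, σ.graphOn Set.univ, PermFamily.not_graphOn_adj_inl_inl,
    PermFamily.not_graphOn_adj_inr_inr, fun v ↦ ?_, hgirth, fun M hM ↦ Nat.lt_ceil.2 ?_, ?_⟩
  · rw [PermFamily.ncard_neighborSet_graphOn_univ hsimple, Nat.card_fin]
  · refine (hmatching M hM).trans_eq ?_
    rw [Nat.card_fin]
    ring
  · convert PermFamily.card_div_lt_sChromIndex hsimple hmatching using 1
    rw [Nat.card_fin, sq, div_div_eq_mul_div]
end
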